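/- Let m ≥ 0, fix T > 0 and let s < 0. Then for every constant C > 0 and every ε > 0 there exist a radial φ ∈ H^s(ℝ^3) with 0 < ‖φ‖_{H^s} ≤ ε and some t ∈ [0,T] such that ‖∫_0^t U(t−τ)[(|x|^{-1} ∗ |U(τ)φ|^2) U(τ)φ] dτ‖_{H^s(ℝ^3)} > C ‖φ‖_{H^s(ℝ^3)}^3. In particular, the estimate sup_{t∈[0,T]} ‖∫_0^t U(t−τ)((|x|^{-1} ∗ |U(τ)φ|^2) U(τ)φ) dτ‖_{H^s} ≲ ‖φ‖_{H^s}^3 fails for radial data in any neighborhood of the origin. -/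

import Mathlib

open MeasureTheory Real Complex
open scoped FourierTransform ENNReal

noncomputable section

abbrev Rd : Type := EuclideanSpace ℝ (Fin 3)

/-- Sobolev `H^s` norm (as an extended real), defined on the Fourier side. -/
def HsNorm (s : ℝ) (f : Rd → ℂ) : ℝ≥0∞ :=
  (∫⁻ ξ : Rd, ENNReal.ofReal ((1 + ‖ξ‖ ^ 2) ^ s * ‖𝓕 f ξ‖ ^ 2)) ^ (1 / 2 : ℝ)

/-- Linear propagator `U(t)` of the boson star equation with mass `m`. -/
def uProp (m t : ℝ) (φ : Rd → ℂ) : Rd → ℂ :=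
  𝓕⁻ fun ξ => Complex.exp (Complex.I * t * ((m - Real.sqrt (m ^ 2 + ‖ξ‖ ^ 2) : ℝ) : ℂ)) * 𝓕 φ ξ

/-- Convolution with the Newtonian potential `|x|⁻¹`. -/
def newton (f : Rd → ℂ) (x : Rd) : ℂ := ∫ y : Rd, f y / (‖x - y‖ : ℂ)

/-- The Hartree nonlinearity `(|x|⁻¹ ∗ |φ|²) φ`. -/
def nonlin (φ : Rd → ℂ) (x : Rd) : ℂ := newton (fun y => (‖φ y‖ : ℂ) ^ 2) x * φ x

/-- The first Picard iterate `∫₀ᵗ U(t-τ)[(|x|⁻¹ ∗ |U(τ)φ|²) U(τ)φ] dτ`. -/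
def duhamelFree (m : ℝ) (φ : Rd → ℂ) (t : ℝ) : Rd → ℂ := fun x =>
  ∫ τ in (0 : ℝ)..t, uProp m (t - τ) (nonlin (uProp m τ φ)) x

/-- Radiality of a function on `ℝ³`. -/
def IsRadial (f : Rd → ℂ) : Prop := ∀ x y : Rd, ‖x‖ = ‖y‖ → f x = f y

/-!
The data are `φ = 𝓕⁻ a` with `a = A` on `|ξ| ≤ N` smoothly cut off at `|ξ| ≤ 2N`, and the time is
`t = 1/(6N)`. On the Fourier side the Duhamel term is an integral of products of three values of
`a` against the positive kernel `1/(π|ζ|²)` and a unimodular factor. As `|φ_m(ξ)| ≤ |ξ|`, the phase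
is at most `3·t·2N = 1`, so the real part of the integrand is at least half its modulus and nothing
cancels: on `|ξ| ≤ N/2` the transform is at least a multiple of `t A³ N⁴ ≈ A³ N³`. With
`W(r) = ∫_{|ξ| ≤ r} (1 + |ξ|²)^s`, this gives `‖φ‖ ≈ A √W(N)` and `‖D‖ ≳ A³ N³ √W(N)`, while
`W(N)/N³ → 0` because `s < 0`; so `‖D‖/‖φ‖³ ≳ N³/W(N)` is unbounded, with `A` free to fix `‖φ‖`.

Since `𝓕` is the transform of integrable functions, every Fourier formula needs integrability,
which is obtained in the Wiener algebra `𝓕 L¹`. The symbol `e^{itφ_m}` is not smooth when `m = 0`,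
but it acts on elements of this algebra with bounded support: the heat symbols `e^{-t|ξ|²}` are
contractions, integrating them gives the resolvent `(λ + |ξ|²)⁻¹`, Balakrishnan's formula then
gives `√(m² + |ξ|²)`, and the exponential series gives the propagator.
-/

open Filter Topology

section WienerNorm

theorem continuous_fourierChar_inner {V : Type*} [NormedAddCommGroup V] [InnerProductSpace ℝ V] :
    Continuous fun p : V × V => 𝐞 (inner ℝ p.1 p.2) :=
  Real.continuous_fourierChar.comp continuous_inner

variable {V : Type*} [NormedAddCommGroup V] [InnerProductSpace ℝ V] [FiniteDimensional ℝ V]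
  [MeasurableSpace V] [BorelSpace V] {α : Type*} [MeasurableSpace α] {μ : Measure α} [SFinite μ]
  {h g k : V → ℂ}

theorem continuous_fourierInv (hh : Integrable h) : Continuous (𝓕⁻ h) := by
  rw [Real.fourierInv_eq_fourier_comp_neg]
  exact VectorFourier.fourierIntegral_continuous Real.continuous_fourierChar
    (by exact continuous_inner) hh.comp_neg

theorem norm_fourierInv_le (h : V → ℂ) (x : V) : ‖𝓕⁻ h x‖ ≤ ∫ ξ, ‖h ξ‖ := by
  rw [Real.fourierInv_eq_fourier_neg]
  exact VectorFourier.norm_fourierIntegral_le_integral_norm _ _ _ _ _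

theorem fourierInv_const_mul (c : ℂ) (h : V → ℂ) (x : V) :
    𝓕⁻ (fun ξ => c * h ξ) x = c * 𝓕⁻ h x := by
  simp only [Real.fourierInv_eq, ← smul_eq_mul, smul_comm _ c, integral_smul]

theorem fourier_const_mul (c : ℂ) (h : V → ℂ) (ξ : V) :
    𝓕 (fun x => c * h x) ξ = c * 𝓕 h ξ := by
  simp only [Real.fourier_eq, ← smul_eq_mul, smul_comm _ c, integral_smul]

theorem fourierInv_add (hh : Integrable h) (hg : Integrable g) (x : V) :
    𝓕⁻ (fun ξ => h ξ + g ξ) x = 𝓕⁻ h x + 𝓕⁻ g x := by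
  simp only [Real.fourierInv_eq_fourier_neg]
  exact congrFun (VectorFourier.fourierIntegral_add (L := innerₗ V) Real.continuous_fourierChar
    (by exact continuous_inner) hh hg) (-x)

theorem fourierInv_integral {Φ : α → V → ℂ}
    (hi : Integrable (Function.uncurry Φ) (μ.prod volume)) (x : V) :
    𝓕⁻ (fun ξ => ∫ a, Φ a ξ ∂μ) x = ∫ a, 𝓕⁻ (Φ a) x ∂μ := by
  have hchar : AEStronglyMeasurable (fun p : α × V => 𝐞 (inner ℝ p.2 x)) (μ.prod volume) :=
    (continuous_fourierChar_inner.comp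
      (continuous_id.prodMk continuous_const)).aestronglyMeasurable.comp_snd
  have hint : Integrable (Function.uncurry fun a ξ => 𝐞 (inner ℝ ξ x) • Φ a ξ) (μ.prod volume) :=
    hi.mono (hchar.smul hi.1) (.of_forall fun p => by simp [Function.uncurry])
  simp only [Real.fourierInv_eq]
  rw [integral_integral_swap hint]
  simp only [Circle.smul_def, integral_smul]

theorem stronglyMeasurable_fourierInv {Φ : α → V → ℂ}
    (hm : StronglyMeasurable (Function.uncurry Φ)) :
    StronglyMeasurable fun p : V × α => 𝓕⁻ (Φ p.2) p.1 := by
  have hchar : StronglyMeasurable fun q : (V × α) × V => 𝐞 (inner ℝ q.2 q.1.1) :=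
    continuous_fourierChar_inner.stronglyMeasurable.comp_measurable
      (measurable_snd.prodMk (measurable_fst.comp measurable_fst))
  have hΦ : StronglyMeasurable fun q : (V × α) × V => Φ q.1.2 q.2 :=
    hm.comp_measurable ((measurable_snd.comp measurable_fst).prodMk measurable_snd)
  simp only [Real.fourierInv_eq]
  exact (hchar.smul hΦ).integral_prod_right'

theorem fourierInv_fourier_mul (hk : Integrable k) (hh : Integrable h) (x : V) :
    𝓕⁻ (fun ξ => 𝓕 k ξ * h ξ) x = ∫ y, k y * 𝓕⁻ h (x - y) := by
  have hchar : Integrable fun ξ => 𝐞 (inner ℝ ξ x) • h ξ :=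
    hh.mono ((continuous_fourierChar_inner.comp
      (continuous_id.prodMk continuous_const)).aestronglyMeasurable.smul hh.1) (by simp)
  have hflip := VectorFourier.integral_fourierIntegral_smul_eq_flip (L := innerₗ V)
    Real.continuous_fourierChar (by exact continuous_inner) hk hchar
  have hshift (y : V) : VectorFourier.fourierIntegral 𝐞 volume (innerₗ V).flip
      (fun ξ => 𝐞 (inner ℝ ξ x) • h ξ) y = 𝓕⁻ h (x - y) := by
    simp only [VectorFourier.fourierIntegral, Real.fourierInv_eq, smul_smul,
      ← AddChar.map_add_eq_mul, inner_sub_right, flip_innerₗ, innerₗ_apply_apply]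
    congr! 4 with ξ
    ring
  simp only [hshift, smul_eq_mul] at hflip
  rw [← hflip, Real.fourierInv_eq]
  exact integral_congr_ae (.of_forall fun ξ => mul_smul_comm _ _ _ |>.symm)

/-- The norm of the Wiener algebra `𝓕L¹`: the `L¹` norm of the inverse Fourier transform. -/
def wienerNorm (h : V → ℂ) : ℝ≥0∞ := ∫⁻ x, ‖𝓕⁻ h x‖ₑ

theorem wienerNorm_const_mul (c : ℂ) (h : V → ℂ) :
    wienerNorm (fun ξ => c * h ξ) = ‖c‖ₑ * wienerNorm h := by
  simp only [wienerNorm, fourierInv_const_mul, enorm_mul]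
  exact lintegral_const_mul' _ _ enorm_ne_top

theorem wienerNorm_add_le (hh : Integrable h) (hg : Integrable g) :
    wienerNorm (fun ξ => h ξ + g ξ) ≤ wienerNorm h + wienerNorm g := by
  rw [wienerNorm, wienerNorm, wienerNorm,
    ← lintegral_add_left (continuous_fourierInv hh).enorm.measurable]
  simp only [fourierInv_add hh hg]
  exact lintegral_mono fun x => enorm_add_le _ _

theorem wienerNorm_integral_le {Φ : α → V → ℂ} (hm : StronglyMeasurable (Function.uncurry Φ))
    (hi : Integrable (Function.uncurry Φ) (μ.prod volume)) :
    wienerNorm (fun ξ => ∫ a, Φ a ξ ∂μ) ≤ ∫⁻ a, wienerNorm (Φ a) ∂μ := by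
  simp only [wienerNorm, fourierInv_integral hi]
  calc ∫⁻ x, ‖∫ a, 𝓕⁻ (Φ a) x ∂μ‖ₑ
      ≤ ∫⁻ x, ∫⁻ a, ‖𝓕⁻ (Φ a) x‖ₑ ∂μ :=
        lintegral_mono fun x => enorm_integral_le_lintegral_enorm _
    _ = ∫⁻ a, (∫⁻ x, ‖𝓕⁻ (Φ a) x‖ₑ) ∂μ :=
        lintegral_lintegral_swap (stronglyMeasurable_fourierInv hm).enorm.aemeasurable

theorem wienerNorm_fourier_mul_le (hk : Integrable k) (hh : Integrable h) :
    wienerNorm (fun ξ => 𝓕 k ξ * h ξ) ≤ (∫⁻ y, ‖k y‖ₑ) * wienerNorm h := by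
  have hmeas : AEMeasurable (fun p : V × V => ‖k p.2 * 𝓕⁻ h (p.1 - p.2)‖ₑ)
      (volume.prod volume) :=
    (hk.1.comp_snd.mul ((continuous_fourierInv hh).comp
      (continuous_fst.sub continuous_snd)).aestronglyMeasurable).enorm
  simp only [wienerNorm, fourierInv_fourier_mul hk hh]
  calc ∫⁻ x, ‖∫ y, k y * 𝓕⁻ h (x - y)‖ₑ
      ≤ ∫⁻ x, ∫⁻ y, ‖k y * 𝓕⁻ h (x - y)‖ₑ :=
        lintegral_mono fun x => enorm_integral_le_lintegral_enorm _
    _ = ∫⁻ y, ∫⁻ x, ‖k y * 𝓕⁻ h (x - y)‖ₑ := lintegral_lintegral_swap hmeas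
    _ = ∫⁻ y, ‖k y‖ₑ * ∫⁻ x, ‖𝓕⁻ h x‖ₑ := by
        refine lintegral_congr fun y => ?_
        simp only [enorm_mul]
        rw [lintegral_const_mul' _ _ enorm_ne_top,
          lintegral_sub_right_eq_self (fun x => ‖𝓕⁻ h x‖ₑ)]
    _ = (∫⁻ y, ‖k y‖ₑ) * ∫⁻ x, ‖𝓕⁻ h x‖ₑ := lintegral_mul_const'' _ hk.1.enorm

theorem integrable_fourierInv (hh : Integrable h) (hW : wienerNorm h < ∞) :
    Integrable (𝓕⁻ h) :=
  ⟨(continuous_fourierInv hh).aestronglyMeasurable, hW⟩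

theorem fourier_fourierInv_of_wienerNorm_lt_top (hc : Continuous h) (hh : Integrable h)
    (hW : wienerNorm h < ∞) : 𝓕 (𝓕⁻ h) = h := by
  refine hc.fourier_fourierInv_eq hh ?_
  simpa only [Real.fourierInv_eq_fourier_neg, neg_neg] using (integrable_fourierInv hh hW).comp_neg

theorem wienerNorm_lt_top_of_contDiff (hs : HasCompactSupport h)
    (hh : ContDiff ℝ (⊤ : ℕ∞) h) : wienerNorm h < ∞ := by
  have hi := (𝓕⁻ (hs.toSchwartzMap hh)).integrable (μ := volume)
  rw [SchwartzMap.fourierInv_coe] at hi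
  exact hi.2

end WienerNorm

section RadialCutoff

variable {V : Type*} [NormedAddCommGroup V] {N : ℝ} {ξ : V}

/-- A smooth radial cutoff, equal to `1` for `‖ξ‖ ≤ N` and to `0` for `2 * N < ‖ξ‖`; it is used
both to localize symbols and as the profile of the data. -/
def radialCutoff (N : ℝ) (ξ : V) : ℝ := Real.smoothTransition (2 - ‖ξ‖ ^ 2 / N ^ 2)

theorem radialCutoff_contDiff [InnerProductSpace ℝ V] (N : ℝ) :
    ContDiff ℝ (⊤ : ℕ∞) (radialCutoff N : V → ℝ) :=
  Real.smoothTransition.contDiff.comp (contDiff_const.sub ((contDiff_norm_sq ℝ).div_const _))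

theorem radialCutoff_eq_one (hN : 0 < N) (hξ : ‖ξ‖ ≤ N) : radialCutoff N ξ = 1 := by
  refine Real.smoothTransition.one_of_one_le ?_
  have : ‖ξ‖ ^ 2 / N ^ 2 ≤ 1 := (div_le_one (by positivity)).2 (by gcongr)
  linarith

theorem radialCutoff_eq_zero (hN : 0 < N) (hξ : 2 * N < ‖ξ‖) : radialCutoff N ξ = 0 := by
  refine Real.smoothTransition.zero_of_nonpos ?_
  have : 2 ≤ ‖ξ‖ ^ 2 / N ^ 2 := (le_div_iff₀ (by positivity)).2 (by nlinarith)
  linarith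

theorem radialCutoff_nonneg (N : ℝ) (ξ : V) : 0 ≤ radialCutoff N ξ :=
  Real.smoothTransition.nonneg _

theorem radialCutoff_le_one (N : ℝ) (ξ : V) : radialCutoff N ξ ≤ 1 :=
  Real.smoothTransition.le_one _

end RadialCutoff

section TestSymbol

variable {V E : Type*} [NormedAddCommGroup V] [NormedAddCommGroup E] {R : ℝ} {h : V → E}

/-- Continuous functions of frequency supported in the ball of radius `R`. -/
structure IsTestSymbol (R : ℝ) (h : V → E) : Prop where
  continuous : Continuous h
  eq_zero : ∀ ξ, R < ‖ξ‖ → h ξ = 0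

namespace IsTestSymbol

theorem hasCompactSupport [ProperSpace V] (hh : IsTestSymbol R h) : HasCompactSupport h :=
  .intro (isCompact_closedBall (0 : V) R) fun ξ hξ => hh.eq_zero ξ (by simpa using hξ)

theorem integrable [ProperSpace V] [MeasurableSpace V] [BorelSpace V] {μ : Measure V}
    [IsFiniteMeasureOnCompacts μ] (hh : IsTestSymbol R h) : Integrable h μ :=
  hh.continuous.integrable_of_hasCompactSupport hh.hasCompactSupport

theorem mul {h : V → ℂ} (hh : IsTestSymbol R h) {σ : V → ℂ} (hσ : Continuous σ) :
    IsTestSymbol R fun ξ => σ ξ * h ξ :=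
  ⟨hσ.mul hh.continuous, fun ξ hξ => by rw [hh.eq_zero ξ hξ, mul_zero]⟩

theorem norm (hh : IsTestSymbol R h) : IsTestSymbol R fun ξ => ‖h ξ‖ :=
  ⟨hh.continuous.norm, fun ξ hξ => by rw [hh.eq_zero ξ hξ, norm_zero]⟩

theorem ofReal {h : V → ℝ} (hh : IsTestSymbol R h) : IsTestSymbol R fun ξ => (h ξ : ℂ) :=
  ⟨Complex.continuous_ofReal.comp hh.continuous, fun ξ hξ => by
    rw [hh.eq_zero ξ hξ, Complex.ofReal_zero]⟩

end IsTestSymbol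

end TestSymbol

section WienerMultiplier

open scoped NNReal

variable {V : Type*} [NormedAddCommGroup V] [InnerProductSpace ℝ V] [FiniteDimensional ℝ V]
  [MeasurableSpace V] [BorelSpace V] {R : ℝ} {σ ρ : V → ℂ} {A B : ℝ≥0∞}

/-- Multiplication by `σ` is bounded by `B` on the elements of the Wiener algebra `𝓕L¹` supported
in the ball of radius `R`. -/
structure IsWienerMultiplier (R : ℝ) (σ : V → ℂ) (B : ℝ≥0∞) : Prop where
  continuous : Continuous σ
  wienerNorm_le : ∀ h, IsTestSymbol R h → wienerNorm (fun ξ => σ ξ * h ξ) ≤ B * wienerNorm h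

namespace IsWienerMultiplier

theorem const (c : ℂ) : IsWienerMultiplier R (fun _ : V => c) ‖c‖ₑ :=
  ⟨continuous_const, fun h _ => (wienerNorm_const_mul c h).le⟩

theorem add (hσ : IsWienerMultiplier R σ A) (hρ : IsWienerMultiplier R ρ B) :
    IsWienerMultiplier R (fun ξ => σ ξ + ρ ξ) (A + B) := by
  refine ⟨hσ.continuous.add hρ.continuous, fun h hh => ?_⟩
  simp only [add_mul]
  exact (wienerNorm_add_le (hh.mul hσ.continuous).integrable
    (hh.mul hρ.continuous).integrable).trans
    (add_le_add (hσ.wienerNorm_le h hh) (hρ.wienerNorm_le h hh))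

theorem mul (hσ : IsWienerMultiplier R σ A) (hρ : IsWienerMultiplier R ρ B) :
    IsWienerMultiplier R (fun ξ => σ ξ * ρ ξ) (A * B) := by
  refine ⟨hσ.continuous.mul hρ.continuous, fun h hh => ?_⟩
  simp only [mul_assoc]
  exact (hσ.wienerNorm_le _ (hh.mul hρ.continuous)).trans
    (mul_le_mul_right (hρ.wienerNorm_le h hh) A)

theorem pow (hσ : IsWienerMultiplier R σ B) (n : ℕ) :
    IsWienerMultiplier R (fun ξ => σ ξ ^ n) (B ^ n) := by
  induction n with
  | zero => simpa using const (V := V) (R := R) 1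
  | succ n ih => simpa only [pow_succ] using ih.mul hσ

theorem mono (hσ : IsWienerMultiplier R σ A) (hAB : A ≤ B) : IsWienerMultiplier R σ B :=
  ⟨hσ.continuous, fun h hh => (hσ.wienerNorm_le h hh).trans (mul_le_mul_left hAB _)⟩

theorem of_fourier {k : V → ℂ} (hk : Integrable k) (hσ : Continuous σ)
    (heq : ∀ ξ, ‖ξ‖ ≤ R → 𝓕 k ξ = σ ξ) : IsWienerMultiplier R σ (∫⁻ y, ‖k y‖ₑ) := by
  refine ⟨hσ, fun h hh => ?_⟩
  convert wienerNorm_fourier_mul_le hk hh.integrable using 3 with ξ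
  rcases le_or_gt ‖ξ‖ R with hξ | hξ
  · rw [heq ξ hξ]
  · simp only [hh.eq_zero ξ hξ, mul_zero]

theorem exists_of_contDiff (R : ℝ) (hσ : ContDiff ℝ (⊤ : ℕ∞) σ) :
    ∃ B : ℝ≥0, IsWienerMultiplier R σ B := by
  set N := |R| + 1
  have hN : 0 < N := by positivity
  set h : V → ℂ := fun ξ => radialCutoff N ξ * σ ξ
  have hsmooth : ContDiff ℝ (⊤ : ℕ∞) h :=
    (Complex.ofRealCLM.contDiff.comp (radialCutoff_contDiff N)).mul hσ
  have htest : IsTestSymbol (2 * N) h :=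
    ⟨hsmooth.continuous, fun ξ hξ => by simp only [h, radialCutoff_eq_zero hN hξ, ofReal_zero,
      zero_mul]⟩
  have hW : wienerNorm h < ∞ := wienerNorm_lt_top_of_contDiff htest.hasCompactSupport hsmooth
  refine ⟨(wienerNorm h).toNNReal, ?_⟩
  rw [ENNReal.coe_toNNReal hW.ne]
  refine of_fourier (integrable_fourierInv htest.integrable hW) hσ.continuous fun ξ hξ => ?_
  have hξN : ‖ξ‖ ≤ N := hξ.trans ((le_abs_self R).trans (le_add_of_nonneg_right zero_le_one))
  rw [fourier_fourierInv_of_wienerNorm_lt_top htest.continuous htest.integrable hW]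
  simp only [h, radialCutoff_eq_one hN hξN, ofReal_one, one_mul]

theorem integral {α : Type*} [MeasurableSpace α] {μ : Measure α} [SFinite μ] {σ : α → V → ℂ}
    {B : α → ℝ≥0∞} {b : α → ℝ} (hm : StronglyMeasurable (Function.uncurry σ))
    (hσ : ∀ᵐ a ∂μ, IsWienerMultiplier R (σ a) (B a)) (hB : AEMeasurable B μ)
    (hb : Integrable b μ) (hle : ∀ᵐ a ∂μ, ∀ ξ, ‖ξ‖ ≤ R → ‖σ a ξ‖ ≤ b a)
    (hc : Continuous fun ξ => ∫ a, σ a ξ ∂μ) :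
    IsWienerMultiplier R (fun ξ => ∫ a, σ a ξ ∂μ) (∫⁻ a, B a ∂μ) := by
  refine ⟨hc, fun h hh => ?_⟩
  have hmeas : StronglyMeasurable (Function.uncurry fun a ξ => σ a ξ * h ξ) :=
    hm.mul (hh.continuous.stronglyMeasurable.comp_measurable measurable_snd)
  have hint : Integrable (Function.uncurry fun a ξ => σ a ξ * h ξ) (μ.prod volume) := by
    refine (hb.mul_prod hh.integrable.norm).mono hmeas.aestronglyMeasurable ?_
    filter_upwards [Measure.quasiMeasurePreserving_fst.ae hle] with p hp
    rcases le_or_gt ‖p.2‖ R with hR | hR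
    · simp only [Function.uncurry, norm_mul, norm_norm]
      gcongr
      exact (hp _ hR).trans (le_abs_self _)
    · simp [Function.uncurry, hh.eq_zero _ hR]
  calc wienerNorm (fun ξ => (∫ a, σ a ξ ∂μ) * h ξ)
      = wienerNorm (fun ξ => ∫ a, σ a ξ * h ξ ∂μ) := by simp only [integral_mul_const]
    _ ≤ ∫⁻ a, wienerNorm (fun ξ => σ a ξ * h ξ) ∂μ := wienerNorm_integral_le hmeas hint
    _ ≤ ∫⁻ a, B a * wienerNorm h ∂μ :=
        lintegral_mono_ae (hσ.mono fun a ha => ha.wienerNorm_le h hh)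
    _ = (∫⁻ a, B a ∂μ) * wienerNorm h := lintegral_mul_const'' _ hB

theorem tsum {σ : ℕ → V → ℂ} {B : ℕ → ℝ≥0∞} {b : ℕ → ℝ}
    (hσ : ∀ n, IsWienerMultiplier R (σ n) (B n)) (hb : Summable b)
    (hle : ∀ n ξ, ‖ξ‖ ≤ R → ‖σ n ξ‖ ≤ b n) (hsum : ∀ ξ, Summable fun n => ‖σ n ξ‖)
    (hc : Continuous fun ξ => ∑' n, σ n ξ) :
    IsWienerMultiplier R (fun ξ => ∑' n, σ n ξ) (∑' n, B n) := by
  have hint (ξ : V) : ∫ n, σ n ξ ∂Measure.count = ∑' n, σ n ξ := by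
    rw [integral_countable (integrable_count_iff.2 (hsum ξ))]
    simp
  have hmeas : StronglyMeasurable (Function.uncurry σ) :=
    (measurable_from_prod_countable_right fun n => (hσ n).continuous.measurable).stronglyMeasurable
  simp only [← hint, ← lintegral_count] at hc ⊢
  exact integral hmeas (.of_forall hσ) (measurable_of_countable B).aemeasurable
    (integrable_count_iff.2 hb.norm) (.of_forall hle) hc

theorem exp {B : ℝ≥0} (hσ : IsWienerMultiplier R σ B) :
    IsWienerMultiplier R (fun ξ => cexp (σ ξ)) (ENNReal.ofReal (rexp B)) := by
  obtain ⟨M, hM⟩ := (isCompact_closedBall (0 : V) R).exists_bound_of_continuousOn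
    hσ.continuous.continuousOn
  have hterm (n : ℕ) : IsWienerMultiplier R (fun ξ => σ ξ ^ n / (n.factorial : ℂ))
      (ENNReal.ofReal ((B : ℝ) ^ n / n.factorial)) := by
    have henorm : ENNReal.ofReal ((B : ℝ) ^ n / n.factorial) =
        B ^ n * ‖(n.factorial : ℂ)⁻¹‖ₑ := by
      rw [← ofReal_norm, norm_inv, Complex.norm_natCast, div_eq_mul_inv,
        ENNReal.ofReal_mul (by positivity), ENNReal.ofReal_pow B.coe_nonneg,
        ENNReal.ofReal_coe_nnreal]
    rw [henorm]
    exact (hσ.pow n).mul (const _)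
  have hexp : (fun ξ => cexp (σ ξ)) = fun ξ => ∑' n : ℕ, σ ξ ^ n / (n.factorial : ℂ) := by
    simp only [Complex.exp_eq_exp_ℂ, NormedSpace.exp_eq_tsum_div]
  have hnorm : ENNReal.ofReal (rexp B) =
      ∑' n : ℕ, ENNReal.ofReal ((B : ℝ) ^ n / n.factorial) := by
    rw [Real.exp_eq_exp_ℝ, NormedSpace.exp_eq_tsum_div,
      ENNReal.ofReal_tsum_of_nonneg (fun n => by positivity) (Real.summable_pow_div_factorial _)]
  rw [hexp, hnorm]
  refine tsum hterm (Real.summable_pow_div_factorial M) (fun n ξ hξ => ?_) (fun ξ => ?_)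
    (hexp ▸ hσ.continuous.cexp)
  · rw [norm_div, norm_pow, Complex.norm_natCast]
    gcongr
    exact hM ξ (by simpa using hξ)
  · simpa only [norm_div, norm_pow, Complex.norm_natCast] using
      Real.summable_pow_div_factorial ‖σ ξ‖

end IsWienerMultiplier

end WienerMultiplier

section Gaussian

variable {V : Type*} [NormedAddCommGroup V] [InnerProductSpace ℝ V] [FiniteDimensional ℝ V]
  [MeasurableSpace V] [BorelSpace V]

theorem integrable_rexp_neg_mul_sq_norm {b : ℝ} (hb : 0 < b) :
    Integrable fun v : V => rexp (-b * ‖v‖ ^ 2) :=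
  .of_integral_ne_zero <| by
    rw [GaussianFourier.integral_rexp_neg_mul_sq_norm hb]
    positivity

theorem fourier_rexp_neg_mul_sq_norm {b : ℝ} (hb : 0 < b) (ξ : V) :
    𝓕 (fun v : V => (rexp (-b * ‖v‖ ^ 2) : ℂ)) ξ =
      ((∫ v : V, rexp (-b * ‖v‖ ^ 2)) * rexp (-π ^ 2 * ‖ξ‖ ^ 2 / b) : ℝ) := by
  have h := fourier_gaussian_innerProductSpace (b := (b : ℂ)) (by simpa using hb) ξ
  rw [GaussianFourier.integral_rexp_neg_mul_sq_norm hb]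
  push_cast [Complex.ofReal_cpow (div_nonneg pi_nonneg hb.le)] at h ⊢
  exact h

theorem isWienerMultiplier_gaussian (R : ℝ) {r : ℝ} (hr : 0 < r) :
    IsWienerMultiplier R (fun ξ : V => (rexp (-r * ‖ξ‖ ^ 2) : ℂ)) 1 := by
  set b := π ^ 2 / r
  have hb0 : 0 < b := by positivity
  set c := ∫ v : V, rexp (-b * ‖v‖ ^ 2) with hc
  have hc0 : 0 < c := by
    rw [hc, GaussianFourier.integral_rexp_neg_mul_sq_norm hb0]
    positivity
  have hint := integrable_rexp_neg_mul_sq_norm (V := V) hb0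
  have hnorm : ∫⁻ v : V, ‖(c : ℂ)⁻¹ * (rexp (-b * ‖v‖ ^ 2) : ℂ)‖ₑ = 1 := by
    rw [← ofReal_integral_norm_eq_lintegral_enorm (hint.ofReal.const_mul _)]
    simp only [norm_mul, norm_inv, norm_real, norm_of_nonneg hc0.le, norm_of_nonneg (exp_nonneg _)]
    rw [integral_const_mul, ← hc, inv_mul_cancel₀ hc0.ne', ENNReal.ofReal_one]
  rw [← hnorm]
  refine .of_fourier (hint.ofReal.const_mul _) (by fun_prop) fun ξ _ => ?_
  rw [fourier_const_mul, fourier_rexp_neg_mul_sq_norm hb0, ← hc, ← ofReal_inv, ← ofReal_mul,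
    inv_mul_cancel_left₀ hc0.ne']
  congr 2
  field

end Gaussian

section Subordination

open scoped NNReal

/-- The weight of Balakrishnan's formula `x ^ p = ∫ w(t) x / (t + x) dt` over `t > 0`. -/
def balakrishnanWeight (p t : ℝ) : ℝ :=
  (∫ u in Set.Ioi 0, rpowIntegrand₀₁ p u 1)⁻¹ * t ^ (p - 1)

theorem balakrishnanWeight_nonneg {p t : ℝ} (hp : p ∈ Set.Ioo 0 1) (ht : 0 ≤ t) :
    0 ≤ balakrishnanWeight p t :=
  mul_nonneg (inv_nonneg.2 (integral_rpowIntegrand₀₁_one_pos hp).le) (rpow_nonneg ht _)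

theorem eqOn_balakrishnanWeight_mul {p x : ℝ} (hp : p ∈ Set.Ioo 0 1) (hx : 0 ≤ x) :
    Set.EqOn (fun t => (∫ u in Set.Ioi 0, rpowIntegrand₀₁ p u 1)⁻¹ * rpowIntegrand₀₁ p t x)
      (fun t => balakrishnanWeight p t * (x / (t + x))) (Set.Ioi 0) := fun t ht => by
  simp only [balakrishnanWeight, rpowIntegrand₀₁_eqOn_pow_div hp hx ht]
  ring

theorem integrableOn_balakrishnanWeight_mul {p x : ℝ} (hp : p ∈ Set.Ioo 0 1) (hx : 0 ≤ x) :
    IntegrableOn (fun t => balakrishnanWeight p t * (x / (t + x))) (Set.Ioi 0) :=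
  IntegrableOn.congr_fun ((integrableOn_rpowIntegrand₀₁_Ioi hp hx).const_mul _)
    (eqOn_balakrishnanWeight_mul hp hx) measurableSet_Ioi

theorem setIntegral_balakrishnanWeight_mul {p x : ℝ} (hp : p ∈ Set.Ioo 0 1) (hx : 0 ≤ x) :
    ∫ t in Set.Ioi 0, balakrishnanWeight p t * (x / (t + x)) = x ^ p := by
  rw [← setIntegral_congr_fun measurableSet_Ioi (eqOn_balakrishnanWeight_mul hp hx),
    integral_const_mul, rpow_eq_const_mul_integral hp hx]

theorem setLIntegral_enorm_balakrishnanWeight_mul {p c x : ℝ} (hp : p ∈ Set.Ioo 0 1)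
    (hc : 0 ≤ c) (hx : 0 ≤ x) :
    ∫⁻ t in Set.Ioi 0, ‖(balakrishnanWeight p t : ℂ)‖ₑ * ENNReal.ofReal (c * (x / (t + x))) =
      ENNReal.ofReal (c * x ^ p) := by
  rw [← setIntegral_balakrishnanWeight_mul hp hx, ← integral_const_mul,
    ofReal_integral_eq_lintegral_ofReal ((integrableOn_balakrishnanWeight_mul hp hx).const_mul c)]
  · refine setLIntegral_congr_fun measurableSet_Ioi fun t ht => ?_
    have hw := balakrishnanWeight_nonneg hp (Set.mem_Ioi.1 ht).le
    rw [← ofReal_norm, norm_real, norm_of_nonneg hw, ← ENNReal.ofReal_mul hw]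
    ring_nf
  · filter_upwards [ae_restrict_mem measurableSet_Ioi] with t ht
    have hw := balakrishnanWeight_nonneg hp (Set.mem_Ioi.1 ht).le
    have ht : 0 < t := ht
    positivity

variable {V : Type*} [NormedAddCommGroup V] [InnerProductSpace ℝ V] [FiniteDimensional ℝ V]
  [MeasurableSpace V] [BorelSpace V] {R : ℝ} {lam : V → ℝ}

namespace IsWienerMultiplier

-- The resolvent is the Laplace transform of the semigroup: `t / (t + x) = ∫ t e^{-tr} e^{-rx} dr`.
theorem resolvent (hc : Continuous lam) (h0 : ∀ ξ, 0 ≤ lam ξ)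
    (hsemi : ∀ r, 0 < r → IsWienerMultiplier R (fun ξ => (rexp (-r * lam ξ) : ℂ)) 1)
    {t : ℝ} (ht : 0 < t) :
    IsWienerMultiplier R (fun ξ => ((t / (t + lam ξ) : ℝ) : ℂ)) 1 := by
  have hint : IntegrableOn (fun r => t * rexp (-t * r)) (Set.Ioi 0) :=
    (integrableOn_exp_mul_Ioi (neg_lt_zero.2 ht) 0).const_mul t
  have hone {a : ℝ} (ha : 0 < a) : ∫ r in Set.Ioi 0, rexp (-a * r) = a⁻¹ := by
    rw [integral_exp_mul_Ioi (neg_lt_zero.2 ha) 0]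
    simp
  have hLaplace : (fun ξ => ((t / (t + lam ξ) : ℝ) : ℂ)) = fun ξ => ∫ r in Set.Ioi 0,
      ((t * rexp (-t * r) : ℝ) : ℂ) * (rexp (-r * lam ξ) : ℂ) := by
    ext ξ
    have hexp (r : ℝ) : t * rexp (-t * r) * rexp (-r * lam ξ) = t * rexp (-(t + lam ξ) * r) := by
      rw [mul_assoc, ← Real.exp_add]
      ring_nf
    simp only [← ofReal_mul, hexp]
    rw [integral_complex_ofReal, integral_const_mul, hone (add_pos_of_pos_of_nonneg ht (h0 ξ)),
      div_eq_mul_inv]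
  have hmass : ∫⁻ r in Set.Ioi 0, ‖((t * rexp (-t * r) : ℝ) : ℂ)‖ₑ = 1 := by
    rw [← ofReal_integral_norm_eq_lintegral_enorm hint.ofReal]
    simp only [norm_real, norm_mul, norm_of_nonneg ht.le, norm_of_nonneg (exp_nonneg _)]
    rw [integral_const_mul, hone ht, mul_inv_cancel₀ ht.ne', ENNReal.ofReal_one]
  have hcont : Continuous fun ξ => ((t / (t + lam ξ) : ℝ) : ℂ) :=
    continuous_ofReal.comp (continuous_const.div (continuous_const.add hc)
      fun ξ => (add_pos_of_pos_of_nonneg ht (h0 ξ)).ne')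
  rw [hLaplace, ← hmass]
  refine integral (b := fun r => t * rexp (-t * r)) ?_ ?_ ?_ hint ?_ (hLaplace ▸ hcont)
  · exact Continuous.stronglyMeasurable (by simp only [Function.uncurry_def]; fun_prop)
  · filter_upwards [ae_restrict_mem measurableSet_Ioi] with r hr
    simpa only [mul_one] using (const _).mul (hsemi r hr)
  · fun_prop
  · filter_upwards [ae_restrict_mem measurableSet_Ioi] with r hr ξ _
    simp only [norm_mul, norm_real, norm_of_nonneg ht.le, norm_of_nonneg (exp_nonneg _)]
    refine mul_le_of_le_one_right (by positivity) (Real.exp_le_one_iff.2 ?_)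
    nlinarith [h0 ξ, Set.mem_Ioi.1 hr]

theorem one_sub_resolvent {B : ℝ≥0} (h0 : ∀ ξ, 0 ≤ lam ξ)
    (hsemi : ∀ r, 0 < r → IsWienerMultiplier R (fun ξ => (rexp (-r * lam ξ) : ℂ)) 1)
    (hlam : IsWienerMultiplier R (fun ξ => (lam ξ : ℂ)) B) {t : ℝ} (ht : 0 < t) :
    IsWienerMultiplier R (fun ξ => ((lam ξ / (t + lam ξ) : ℝ) : ℂ))
      (ENNReal.ofReal (3 * (B / (t + B)))) := by
  have hres := resolvent (Complex.continuous_re.comp hlam.continuous) h0 hsemi ht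
  have hpos (ξ : V) : (t + lam ξ : ℂ) ≠ 0 := by
    exact_mod_cast (add_pos_of_pos_of_nonneg ht (h0 ξ)).ne'
  have ht' : (t : ℂ) ≠ 0 := by exact_mod_cast ht.ne'
  have hB : (0 : ℝ) < t + B := by positivity
  rcases le_total (B : ℝ) (2 * t) with hBt | hBt
  · have heq (ξ : V) : ((lam ξ / (t + lam ξ) : ℝ) : ℂ) =
        (t : ℂ)⁻¹ * (((t / (t + lam ξ) : ℝ) : ℂ) * (lam ξ : ℂ)) := by
      push_cast
      field [hpos ξ]
    simp only [heq]
    refine ((const (t : ℂ)⁻¹).mul (hres.mul hlam)).mono ?_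
    rw [one_mul, ← ofReal_norm, ← ENNReal.ofReal_coe_nnreal (p := B),
      ← ENNReal.ofReal_mul (norm_nonneg _), norm_inv, norm_real, norm_of_nonneg ht.le]
    refine ENNReal.ofReal_le_ofReal ?_
    rw [inv_mul_eq_div, ← mul_div_assoc, div_le_div_iff₀ ht hB]
    nlinarith [B.coe_nonneg]
  · have heq (ξ : V) : ((lam ξ / (t + lam ξ) : ℝ) : ℂ) =
        1 + (-1) * ((t / (t + lam ξ) : ℝ) : ℂ) := by
      push_cast
      field [hpos ξ]
    simp only [heq]
    refine ((const 1).add ((const (-1)).mul hres)).mono ?_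
    simp only [enorm_neg, enorm_one, mul_one, one_add_one_eq_two]
    rw [← ENNReal.ofReal_ofNat]
    refine ENNReal.ofReal_le_ofReal ?_
    rw [← mul_div_assoc, le_div_iff₀ hB]
    linarith

theorem rpow {B : ℝ≥0} {p : ℝ} (hp : p ∈ Set.Ioo 0 1) (h0 : ∀ ξ, 0 ≤ lam ξ)
    (hsemi : ∀ r, 0 < r → IsWienerMultiplier R (fun ξ => (rexp (-r * lam ξ) : ℂ)) 1)
    (hlam : IsWienerMultiplier R (fun ξ => (lam ξ : ℂ)) B) :
    IsWienerMultiplier R (fun ξ => ((lam ξ ^ p : ℝ) : ℂ)) (ENNReal.ofReal (3 * B ^ p)) := by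
  have hc : Continuous lam := Complex.continuous_re.comp hlam.continuous
  obtain ⟨M, hM⟩ := (isCompact_closedBall (0 : V) R).exists_bound_of_continuousOn hc.continuousOn
  have hformula : (fun ξ => ((lam ξ ^ p : ℝ) : ℂ)) = fun ξ => ∫ t in Set.Ioi 0,
      (balakrishnanWeight p t : ℂ) * ((lam ξ / (t + lam ξ) : ℝ) : ℂ) := by
    ext ξ
    simp only [← ofReal_mul]
    rw [integral_complex_ofReal, setIntegral_balakrishnanWeight_mul hp (h0 ξ)]
  have hcont : Continuous fun ξ => ((lam ξ ^ p : ℝ) : ℂ) :=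
    continuous_ofReal.comp (hc.rpow_const fun _ => .inr hp.1.le)
  rw [hformula, ← setLIntegral_enorm_balakrishnanWeight_mul hp (by norm_num) B.coe_nonneg]
  refine integral ?_ ?_ (by unfold balakrishnanWeight; fun_prop)
    (integrableOn_balakrishnanWeight_mul hp (abs_nonneg M)) ?_ (hformula ▸ hcont)
  · refine Measurable.stronglyMeasurable ?_
    unfold balakrishnanWeight Function.uncurry
    fun_prop
  · filter_upwards [ae_restrict_mem measurableSet_Ioi] with t ht
    exact (const _).mul (one_sub_resolvent h0 hsemi hlam ht)
  · filter_upwards [ae_restrict_mem measurableSet_Ioi] with t ht ξ hξ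
    have hw := balakrishnanWeight_nonneg hp (Set.mem_Ioi.1 ht).le
    have ht : 0 < t := ht
    have hlamM : lam ξ ≤ |M| :=
      (le_abs_self _).trans ((hM ξ (by simpa using hξ)).trans (le_abs_self M))
    have hξ0 := h0 ξ
    rw [norm_mul, norm_real, norm_real, norm_of_nonneg hw,
      norm_of_nonneg (div_nonneg hξ0 (add_pos_of_pos_of_nonneg ht hξ0).le)]
    refine mul_le_mul_of_nonneg_left ?_ hw
    rw [div_le_div_iff₀ (by positivity) (by positivity)]
    nlinarith

end IsWienerMultiplier

end Subordination

section Propagator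

open scoped NNReal

variable {V : Type*} [NormedAddCommGroup V] {m : ℝ}

/-- The dispersion relation `φ_m(ξ) = m - √(m² + |ξ|²)`. -/
def phase (m : ℝ) (ξ : V) : ℝ := m - √(m ^ 2 + ‖ξ‖ ^ 2)

/-- The Fourier multiplier `e^{itφ_m}` of the linear propagator `U(t)`. -/
def propagatorSymbol (m t : ℝ) (ξ : V) : ℂ := cexp (I * t * (phase m ξ : ℂ))

theorem continuous_phase (m : ℝ) : Continuous (phase m : V → ℝ) := by
  unfold phase
  fun_prop

theorem continuous_propagatorSymbol (m : ℝ) :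
    Continuous fun p : ℝ × V => propagatorSymbol m p.1 p.2 := by
  have := continuous_phase (V := V) m
  unfold propagatorSymbol
  fun_prop

theorem abs_phase_le (hm : 0 ≤ m) (ξ : V) : |phase m ξ| ≤ ‖ξ‖ := by
  have hlow : m ≤ √(m ^ 2 + ‖ξ‖ ^ 2) := Real.le_sqrt_of_sq_le (by nlinarith [sq_nonneg ‖ξ‖])
  have hup : √(m ^ 2 + ‖ξ‖ ^ 2) ≤ m + ‖ξ‖ :=
    Real.sqrt_le_iff.2 ⟨by positivity, by nlinarith [norm_nonneg ξ]⟩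
  rw [phase, abs_le]
  constructor <;> linarith [norm_nonneg ξ]

theorem propagatorSymbol_eq_exp (m t : ℝ) (ξ : V) :
    propagatorSymbol m t ξ = cexp ((t * phase m ξ : ℝ) * I) := by
  rw [propagatorSymbol]
  push_cast
  ring_nf

theorem norm_propagatorSymbol (m t : ℝ) (ξ : V) : ‖propagatorSymbol m t ξ‖ = 1 := by
  rw [propagatorSymbol_eq_exp, norm_exp_ofReal_mul_I]

variable [InnerProductSpace ℝ V] [FiniteDimensional ℝ V] [MeasurableSpace V] [BorelSpace V]

theorem exists_isWienerMultiplier_phase (m R : ℝ) :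
    ∃ B : ℝ≥0, IsWienerMultiplier R (fun ξ : V => (phase m ξ : ℂ)) B := by
  set lam : V → ℝ := fun ξ => m ^ 2 + ‖ξ‖ ^ 2
  have h0 (ξ : V) : 0 ≤ lam ξ := by positivity
  have hsemi (r : ℝ) (hr : 0 < r) : IsWienerMultiplier R (fun ξ => (rexp (-r * lam ξ) : ℂ)) 1 := by
    have hsplit (ξ : V) : (rexp (-r * lam ξ) : ℂ) = rexp (-r * m ^ 2) * rexp (-r * ‖ξ‖ ^ 2) := by
      rw [← ofReal_mul, ← Real.exp_add, ← mul_add]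
    simp only [hsplit]
    refine ((IsWienerMultiplier.const _).mul (isWienerMultiplier_gaussian R hr)).mono ?_
    rw [mul_one, ← ofReal_norm, norm_real, norm_of_nonneg (exp_nonneg _), ENNReal.ofReal_le_one,
      Real.exp_le_one_iff]
    nlinarith [sq_nonneg m]
  obtain ⟨A, hA⟩ := IsWienerMultiplier.exists_of_contDiff (σ := fun ξ => (lam ξ : ℂ)) R
    (Complex.ofRealCLM.contDiff.comp (contDiff_const.add (contDiff_norm_sq ℝ)))
  have hsqrt := IsWienerMultiplier.rpow (p := 1 / 2) (by norm_num) h0 hsemi hA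
  have heq (ξ : V) : (phase m ξ : ℂ) = m + (-1) * ((lam ξ ^ (1 / 2 : ℝ) : ℝ) : ℂ) := by
    rw [phase, ← Real.sqrt_eq_rpow]
    push_cast
    ring
  simp only [heq]
  refine ⟨‖(m : ℂ)‖₊ + Real.toNNReal (3 * A ^ (1 / 2 : ℝ)),
    ((IsWienerMultiplier.const _).add ((IsWienerMultiplier.const (-1)).mul hsqrt)).mono ?_⟩
  simp [ENNReal.ofReal, enorm]

theorem exists_isWienerMultiplier_propagatorSymbol (m R T : ℝ) :
    ∃ B : ℝ≥0, ∀ t : ℝ, |t| ≤ T → IsWienerMultiplier R (propagatorSymbol m t : V → ℂ) B := by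
  obtain ⟨B, hB⟩ := exists_isWienerMultiplier_phase (V := V) m R
  refine ⟨Real.toNNReal (rexp (T * B)), fun t ht => ?_⟩
  have hphase : IsWienerMultiplier R (fun ξ : V => I * t * (phase m ξ : ℂ))
      ((‖t‖₊ * B : ℝ≥0) : ℝ≥0∞) :=
    ((IsWienerMultiplier.const (I * t)).mul hB).mono (by simp [enorm])
  refine hphase.exp.mono (ENNReal.ofReal_le_ofReal (Real.exp_le_exp.2 ?_))
  exact mul_le_mul_of_nonneg_right ht B.2

end Propagator

section Superposition

theorem integrable_uncurry_kernel_mul {α X : Type*} [MeasurableSpace α] [MeasurableSpace X]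
    {μ : Measure α} {ν : Measure X} [SFinite μ] [SFinite ν] {K : α → X → ℝ} {κ : X → ℝ}
    {f : X → ℂ} (hK : Measurable (Function.uncurry K)) (hK0 : ∀ᵐ a ∂μ, ∀ x, 0 ≤ K a x)
    (hKi : ∀ᵐ x ∂ν, Integrable (fun a => K a x) μ) (hκ : ∀ᵐ x ∂ν, ∫ a, K a x ∂μ = κ x)
    (hf : AEStronglyMeasurable f ν) (hκf : Integrable (fun x => (κ x : ℂ) * f x) ν) :
    Integrable (Function.uncurry fun a x => (K a x : ℂ) * f x) (μ.prod ν) := by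
  refine (integrable_prod_iff' (.mul
    (Complex.measurable_ofReal.comp hK).aestronglyMeasurable hf.comp_snd)).2 ⟨?_, ?_⟩
  · filter_upwards [hKi] with x hx using hx.ofReal.mul_const (f x)
  · refine hκf.norm.congr ?_
    filter_upwards [hκ] with x hx
    have hnorm : ∫ a, ‖(K a x : ℂ)‖ ∂μ = κ x := by
      rw [← hx]
      refine integral_congr_ae ?_
      filter_upwards [hK0] with a ha
      rw [norm_real, norm_of_nonneg (ha x)]
    have h0 : 0 ≤ κ x := hnorm ▸ integral_nonneg fun _ => norm_nonneg _
    calc ‖(κ x : ℂ) * f x‖ = (∫ a, ‖(K a x : ℂ)‖ ∂μ) * ‖f x‖ := by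
          rw [norm_mul, norm_real, norm_of_nonneg h0, hnorm]
      _ = ∫ a, ‖(K a x : ℂ) * f x‖ ∂μ := by simp only [norm_mul, integral_mul_const]

end Superposition

section Newton

theorem locallyIntegrable_norm_inv : LocallyIntegrable fun y : Rd => ‖y‖⁻¹ :=
  locallyIntegrable_of_norm_le_rpow (C := 1) (α := 1) (by simp) (by simp)
    (.of_forall fun y => by rw [Real.rpow_neg_one]; simp) (by fun_prop)

theorem integrable_norm_inv_mul {f : Rd → ℂ} (hf : Integrable f) {M : ℝ} (hM : ∀ x, ‖f x‖ ≤ M) :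
    Integrable fun y => ((‖y‖⁻¹ : ℝ) : ℂ) * f y := by
  have hnear : IntegrableOn (fun y => ((‖y‖⁻¹ : ℝ) : ℂ) * f y) (Metric.closedBall 0 1) :=
    (locallyIntegrable_norm_inv.integrableOn_isCompact (isCompact_closedBall 0 1)).ofReal.mul_bdd
      hf.1.restrict (.of_forall hM)
  have hfar : IntegrableOn (fun y => ((‖y‖⁻¹ : ℝ) : ℂ) * f y) (Metric.closedBall 0 1)ᶜ := by
    refine hf.integrableOn.bdd_mul (c := 1) (Measurable.aestronglyMeasurable (by fun_prop)) ?_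
    filter_upwards [ae_restrict_mem measurableSet_closedBall.compl] with y hy
    have hy : 1 < ‖y‖ := by simpa using hy
    simpa using inv_le_one_of_one_le₀ hy.le
  simpa using hnear.union hfar

/-- The Fourier multiplier `1 / (π|ξ|²)` of the Newtonian potential; its value at the origin is
irrelevant. -/
def newtonSymbol (ξ : Rd) : ℝ := (π * ‖ξ‖ ^ 2)⁻¹

theorem newtonSymbol_nonneg (ξ : Rd) : 0 ≤ newtonSymbol ξ := by
  unfold newtonSymbol
  positivity

theorem measurable_newtonSymbol : Measurable newtonSymbol := by
  unfold newtonSymbol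
  fun_prop

theorem locallyIntegrable_newtonSymbol : LocallyIntegrable newtonSymbol := by
  refine locallyIntegrable_of_norm_le_rpow (C := π⁻¹) (α := 2) (by simp) (by simp; norm_num)
    (.of_forall fun ξ => ?_) measurable_newtonSymbol.aestronglyMeasurable
  rw [norm_of_nonneg (newtonSymbol_nonneg ξ), Real.rpow_neg (norm_nonneg _), newtonSymbol, mul_inv,
    Real.rpow_two]

/-- The Gaussians whose superposition over `r > 0` is `|y|⁻¹`. -/
def newtonGaussian (r : ℝ) (y : Rd) : ℝ := r ^ (-(1 / 2) : ℝ) * rexp (-(π * r) * ‖y‖ ^ 2)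

/-- The Fourier transforms of the Gaussians `newtonGaussian r`. -/
def newtonGaussianSymbol (r : ℝ) (ξ : Rd) : ℝ := r ^ (-2 : ℝ) * rexp (-(π * ‖ξ‖ ^ 2) / r)

theorem integrable_newtonGaussian {r : ℝ} (hr : 0 < r) : Integrable (newtonGaussian r) :=
  (integrable_rexp_neg_mul_sq_norm (by positivity)).const_mul _

theorem fourier_newtonGaussian {r : ℝ} (hr : 0 < r) (ξ : Rd) :
    𝓕 (fun y => (newtonGaussian r y : ℂ)) ξ = newtonGaussianSymbol r ξ := by
  have hmass : ∫ y : Rd, rexp (-(π * r) * ‖y‖ ^ 2) = r ^ (-(3 / 2) : ℝ) := by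
    rw [GaussianFourier.integral_rexp_neg_mul_sq_norm (by positivity), finrank_euclideanSpace_fin,
      div_mul_cancel_left₀ pi_ne_zero, Real.inv_rpow hr.le, Real.rpow_neg hr.le, Nat.cast_ofNat]
  have hpow : r ^ (-2 : ℝ) = r ^ (-(1 / 2) : ℝ) * r ^ (-(3 / 2) : ℝ) := by
    rw [← Real.rpow_add hr]
    norm_num
  have hexp : -π ^ 2 * ‖ξ‖ ^ 2 / (π * r) = -(π * ‖ξ‖ ^ 2) / r := by
    rw [← mul_div_mul_left (-(π * ‖ξ‖ ^ 2)) r pi_ne_zero]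
    ring
  simp only [newtonGaussian, newtonGaussianSymbol, ofReal_mul]
  rw [fourier_const_mul, fourier_rexp_neg_mul_sq_norm (by positivity), hmass, hpow, hexp,
    ← ofReal_mul, ← ofReal_mul, mul_assoc]

theorem setIntegral_newtonGaussian {y : Rd} (hy : y ≠ 0) :
    ∫ r in Set.Ioi 0, newtonGaussian r y = ‖y‖⁻¹ := by
  have hy : 0 < ‖y‖ := norm_pos_iff.2 hy
  have h := Real.integral_rpow_mul_exp_neg_mul_Ioi (a := 1 / 2) (r := π * ‖y‖ ^ 2)
    (by norm_num) (by positivity)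
  rw [Real.Gamma_one_half_eq, ← Real.sqrt_eq_rpow, one_div (π * _), Real.sqrt_inv,
    Real.sqrt_mul pi_nonneg, Real.sqrt_sq hy.le, mul_inv, mul_right_comm,
    inv_mul_cancel₀ (by positivity), one_mul] at h
  rw [← h]
  refine setIntegral_congr_fun measurableSet_Ioi fun r _ => ?_
  norm_num [newtonGaussian]
  left
  ring

theorem setIntegral_newtonGaussianSymbol {ξ : Rd} (hξ : ξ ≠ 0) :
    ∫ r in Set.Ioi 0, newtonGaussianSymbol r ξ = newtonSymbol ξ := by
  have hc : 0 < π * ‖ξ‖ ^ 2 := by have := norm_pos_iff.2 hξ; positivity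
  have h := integral_comp_rpow_Ioi (fun y => rexp (-(π * ‖ξ‖ ^ 2) * y)) (p := -1) (by norm_num)
  rw [integral_exp_mul_Ioi (by linarith)] at h
  norm_num only [mul_zero, Real.exp_zero, abs_neg, abs_one, one_mul, smul_eq_mul, neg_div_neg_eq]
    at h
  rw [newtonSymbol, ← one_div, ← h]
  refine setIntegral_congr_fun measurableSet_Ioi fun r _ => ?_
  simp only [newtonGaussianSymbol, Real.rpow_neg_one, div_eq_mul_inv]

theorem fourierInv_newtonSymbol_mul {h : Rd → ℂ} (hh : Integrable h)
    (hNh : Integrable fun ξ => (newtonSymbol ξ : ℂ) * h ξ) (x : Rd) :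
    𝓕⁻ (fun ξ => (newtonSymbol ξ : ℂ) * h ξ) x =
      ∫ r in Set.Ioi 0, 𝓕⁻ (fun ξ => (newtonGaussianSymbol r ξ : ℂ) * h ξ) x := by
  have hne : ∀ᵐ ξ : Rd, ξ ≠ 0 := Measure.ae_ne volume 0
  rw [← fourierInv_integral (integrable_uncurry_kernel_mul
    (μ := volume.restrict (Set.Ioi 0)) (K := newtonGaussianSymbol) (κ := newtonSymbol)
    (by unfold newtonGaussianSymbol Function.uncurry; fun_prop)
    (ae_restrict_of_forall_mem measurableSet_Ioi fun r (hr : 0 < r) ξ => by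
      unfold newtonGaussianSymbol; positivity)
    (hne.mono fun ξ hξ => .of_integral_ne_zero <| by
      rw [setIntegral_newtonGaussianSymbol hξ, newtonSymbol]; simpa [pi_ne_zero] using hξ)
    (hne.mono fun ξ => setIntegral_newtonGaussianSymbol) hh.1 hNh) x,
    Real.fourierInv_eq, Real.fourierInv_eq]
  refine integral_congr_ae (hne.mono fun ξ hξ => ?_)
  beta_reduce
  rw [integral_mul_const, integral_complex_ofReal, setIntegral_newtonGaussianSymbol hξ]

theorem newton_fourierInv {h : Rd → ℂ} (hh : Integrable h) (hW : wienerNorm h < ∞)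
    (hNh : Integrable fun ξ => (newtonSymbol ξ : ℂ) * h ξ) (x : Rd) :
    newton (𝓕⁻ h) x = 𝓕⁻ (fun ξ => (newtonSymbol ξ : ℂ) * h ξ) x := by
  have hshift : Integrable fun y => 𝓕⁻ h (x - y) := (integrable_fourierInv hh hW).comp_sub_left x
  have hne : ∀ᵐ y : Rd, y ≠ 0 := Measure.ae_ne volume 0
  have hspace := integral_integral_swap (integrable_uncurry_kernel_mul
    (μ := volume.restrict (Set.Ioi 0)) (K := newtonGaussian) (κ := fun y => ‖y‖⁻¹)
    (by unfold newtonGaussian Function.uncurry; fun_prop)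
    (ae_restrict_of_forall_mem measurableSet_Ioi fun r (hr : 0 < r) y => by
      unfold newtonGaussian; positivity)
    (hne.mono fun y hy => .of_integral_ne_zero <| by
      rw [setIntegral_newtonGaussian hy]; simpa using hy)
    (hne.mono fun y => setIntegral_newtonGaussian) hshift.1
    (integrable_norm_inv_mul hshift fun y => norm_fourierInv_le h _))
  calc newton (𝓕⁻ h) x = ∫ y, ((‖y‖⁻¹ : ℝ) : ℂ) * 𝓕⁻ h (x - y) := by
        rw [newton, ← integral_sub_left_eq_self _ volume x]
        simp [div_eq_mul_inv, mul_comm]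
    _ = ∫ y, ∫ r in Set.Ioi 0, (newtonGaussian r y : ℂ) * 𝓕⁻ h (x - y) := by
        refine integral_congr_ae (hne.mono fun y hy => ?_)
        beta_reduce
        rw [integral_mul_const, integral_complex_ofReal, setIntegral_newtonGaussian hy]
    _ = ∫ r in Set.Ioi 0, 𝓕⁻ (fun ξ => (newtonGaussianSymbol r ξ : ℂ) * h ξ) x := by
        rw [← hspace]
        refine setIntegral_congr_fun measurableSet_Ioi fun r (hr : 0 < r) => ?_
        have hg : Integrable fun y => (newtonGaussian r y : ℂ) :=
          (integrable_newtonGaussian hr).ofReal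
        simp only [← fourierInv_fourier_mul hg hh, fourier_newtonGaussian hr]
    _ = 𝓕⁻ (fun ξ => (newtonSymbol ξ : ℂ) * h ξ) x :=
        (fourierInv_newtonSymbol_mul hh hNh x).symm

end Newton

open scoped Convolution

section Convolution

variable {V 𝕜 : Type*} [NormedAddCommGroup V] [InnerProductSpace ℝ V] [FiniteDimensional ℝ V]
  [MeasurableSpace V] [BorelSpace V] [RCLike 𝕜]

theorem norm_convolution_le {f g : V → 𝕜} {F G : V → ℝ} {x : V} (hf : ∀ y, ‖f y‖ ≤ F y)
    (hg : ∀ y, ‖g y‖ ≤ G y) (hFG : ConvolutionExistsAt F G x (.mul ℝ ℝ)) :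
    ‖(f ⋆[.mul 𝕜 𝕜] g) x‖ ≤ (F ⋆[.mul ℝ ℝ] G) x :=
  norm_integral_le_of_norm_le hFG <| .of_forall fun y => by
    simp only [ContinuousLinearMap.mul_apply', norm_mul]
    exact mul_le_mul (hf y) (hg _) (norm_nonneg _) ((norm_nonneg _).trans (hf y))

theorem stronglyMeasurable_convolution {α : Type*} [MeasurableSpace α] {f g : α → V → 𝕜}
    (hf : StronglyMeasurable (Function.uncurry f)) (hg : StronglyMeasurable (Function.uncurry g)) :
    StronglyMeasurable (Function.uncurry fun a => f a ⋆[.mul 𝕜 𝕜] g a) := by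
  have hleft : StronglyMeasurable fun q : (α × V) × V => f q.1.1 q.2 :=
    hf.comp_measurable ((measurable_fst.comp measurable_fst).prodMk measurable_snd)
  have hright : StronglyMeasurable fun q : (α × V) × V => g q.1.1 (q.1.2 - q.2) :=
    hg.comp_measurable ((measurable_fst.comp measurable_fst).prodMk
      ((measurable_snd.comp measurable_fst).sub measurable_snd))
  exact (hleft.mul hright).integral_prod_right'

namespace IsTestSymbol

theorem convolutionExistsAt {R : ℝ} {f g : V → 𝕜} (hf : Integrable f) (hg : IsTestSymbol R g)
    (x : V) : ConvolutionExistsAt f g x (.mul 𝕜 𝕜) :=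
  hg.hasCompactSupport.convolutionExists_right _ hf.locallyIntegrable hg.continuous x

theorem convolution {R R' : ℝ} {f g : V → 𝕜} (hf : Integrable f)
    (hf0 : ∀ ξ, R' < ‖ξ‖ → f ξ = 0) (hg : IsTestSymbol R g) :
    IsTestSymbol (R' + R) (f ⋆[.mul 𝕜 𝕜] g) where
  continuous := hg.hasCompactSupport.continuous_convolution_right _ hf.locallyIntegrable
    hg.continuous
  eq_zero ζ hζ := integral_eq_zero_of_ae <| .of_forall fun ξ => by
    rcases lt_or_ge R' ‖ξ‖ with hξ | hξ
    · simp [hf0 ξ hξ]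
    · have := norm_sub_norm_le ζ ξ
      simp [hg.eq_zero (ζ - ξ) (by linarith)]

end IsTestSymbol

theorem fourierInv_convolution {f g : V → ℂ} (hf : Integrable f) (hg : Integrable g) (x : V) :
    𝓕⁻ (f ⋆[.mul ℂ ℂ] g) x = 𝓕⁻ f x * 𝓕⁻ g x := by
  simp only [Real.fourierInv_eq_fourier_neg, Real.fourier_mul_convolution_eq hf hg]

theorem wienerNorm_convolution_le {f g : V → ℂ} (hf : Integrable f) (hg : Integrable g) :
    wienerNorm (f ⋆[.mul ℂ ℂ] g) ≤ ENNReal.ofReal (∫ ξ, ‖f ξ‖) * wienerNorm g := by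
  rw [wienerNorm, wienerNorm, ← lintegral_const_mul' _ _ ENNReal.ofReal_ne_top]
  refine lintegral_mono fun x => ?_
  rw [fourierInv_convolution hf hg, enorm_mul, ← ofReal_norm (𝓕⁻ f x)]
  gcongr
  exact norm_fourierInv_le f x

end Convolution

section ReflectConj

variable {V 𝕜 : Type*} [NormedAddCommGroup V] [RCLike 𝕜]

/-- The reflected conjugate `ξ ↦ conj (a (-ξ))`, the symbol of the complex conjugate of `𝓕⁻ a`. -/
def reflectConj (a : V → 𝕜) (ξ : V) : 𝕜 := starRingEnd 𝕜 (a (-ξ))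

theorem norm_reflectConj (a : V → 𝕜) (ξ : V) : ‖reflectConj a ξ‖ = ‖a (-ξ)‖ :=
  RCLike.norm_conj _

theorem IsTestSymbol.reflectConj {R : ℝ} {a : V → 𝕜} (ha : IsTestSymbol R a) :
    IsTestSymbol R (reflectConj a) where
  continuous := RCLike.continuous_conj.comp (ha.continuous.comp continuous_neg)
  eq_zero ξ hξ := by rw [_root_.reflectConj, ha.eq_zero (-ξ) (by rwa [norm_neg]), map_zero]

variable [InnerProductSpace ℝ V] [FiniteDimensional ℝ V] [MeasurableSpace V] [BorelSpace V]

theorem fourierInv_reflectConj (a : V → ℂ) (x : V) :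
    𝓕⁻ (reflectConj a) x = starRingEnd ℂ (𝓕⁻ a x) := by
  simp only [Real.fourierInv_eq, Circle.smul_def, smul_eq_mul]
  rw [← integral_conj, ← integral_neg_eq_self]
  simp only [reflectConj, neg_neg, inner_neg_left, map_mul, AddChar.map_neg_eq_inv,
    Circle.coe_inv_eq_conj]

theorem wienerNorm_reflectConj (a : V → ℂ) : wienerNorm (reflectConj a) = wienerNorm a := by
  simp only [wienerNorm, fourierInv_reflectConj, RCLike.enorm_conj]

end ReflectConj

section Hartree

variable {𝕜 : Type*} [RCLike 𝕜] {R : ℝ}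

/-- The Fourier transform of the potential `|x|⁻¹ ∗ |φ|²` for `φ = 𝓕⁻ a`. -/
def potentialSymbol (a : Rd → 𝕜) (ζ : Rd) : 𝕜 :=
  newtonSymbol ζ • (a ⋆[.mul 𝕜 𝕜] reflectConj a) ζ

/-- The Fourier transform of the Hartree nonlinearity `(|x|⁻¹ ∗ |φ|²) φ` for `φ = 𝓕⁻ a`. -/
def hartreeSymbol (a : Rd → 𝕜) : Rd → 𝕜 := potentialSymbol a ⋆[.mul 𝕜 𝕜] a

theorem IsTestSymbol.autocorrelation {a : Rd → 𝕜} (ha : IsTestSymbol R a) :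
    IsTestSymbol (R + R) (a ⋆[.mul 𝕜 𝕜] _root_.reflectConj a) :=
  .convolution ha.integrable ha.eq_zero ha.reflectConj

theorem integrable_newtonSymbol_smul {h : Rd → 𝕜} (hh : IsTestSymbol R h) :
    Integrable fun ξ => newtonSymbol ξ • h ξ :=
  locallyIntegrable_newtonSymbol.integrable_smul_right_of_hasCompactSupport hh.continuous
    hh.hasCompactSupport

theorem integrable_potentialSymbol {a : Rd → 𝕜} (ha : IsTestSymbol R a) :
    Integrable (potentialSymbol a) :=
  integrable_newtonSymbol_smul ha.autocorrelation

theorem IsTestSymbol.hartreeSymbol {a : Rd → 𝕜} (ha : IsTestSymbol R a) :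
    IsTestSymbol (R + R + R) (hartreeSymbol a) :=
  .convolution (integrable_potentialSymbol ha)
    (fun ξ hξ => by rw [potentialSymbol, ha.autocorrelation.eq_zero ξ hξ, smul_zero]) ha

theorem norm_potentialSymbol_le {b : Rd → 𝕜} {a : Rd → ℝ} (ha : IsTestSymbol R a)
    (hb : ∀ ξ, ‖b ξ‖ ≤ a ξ) (ζ : Rd) : ‖potentialSymbol b ζ‖ ≤ potentialSymbol a ζ := by
  rw [potentialSymbol, potentialSymbol, norm_smul, norm_of_nonneg (newtonSymbol_nonneg ζ)]
  refine mul_le_mul_of_nonneg_left (norm_convolution_le hb (fun ξ => ?_)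
    (ha.reflectConj.convolutionExistsAt ha.integrable ζ)) (newtonSymbol_nonneg ζ)
  rw [norm_reflectConj]
  exact hb (-ξ)

theorem norm_hartreeSymbol_le {b : Rd → 𝕜} {a : Rd → ℝ} (ha : IsTestSymbol R a)
    (hb : ∀ ξ, ‖b ξ‖ ≤ a ξ) (ξ : Rd) : ‖hartreeSymbol b ξ‖ ≤ hartreeSymbol a ξ :=
  norm_convolution_le (norm_potentialSymbol_le ha hb) hb
    (ha.convolutionExistsAt (integrable_potentialSymbol ha) ξ)

theorem stronglyMeasurable_hartreeSymbol {α : Type*} [MeasurableSpace α] {b : α → Rd → 𝕜}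
    (hb : StronglyMeasurable (Function.uncurry b)) :
    StronglyMeasurable (Function.uncurry fun τ => hartreeSymbol (b τ)) := by
  have hreflect : StronglyMeasurable (Function.uncurry fun τ => reflectConj (b τ)) :=
    RCLike.continuous_conj.comp_stronglyMeasurable
      (hb.comp_measurable (measurable_fst.prodMk measurable_snd.neg))
  exact stronglyMeasurable_convolution ((measurable_newtonSymbol.comp
    measurable_snd).stronglyMeasurable.smul (stronglyMeasurable_convolution hb hreflect)) hb

theorem nonlin_fourierInv {a : Rd → ℂ} (ha : IsTestSymbol R a) (hW : wienerNorm a < ∞) :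
    nonlin (𝓕⁻ a) = 𝓕⁻ (hartreeSymbol a) := by
  have hdensity : (fun y => (‖𝓕⁻ a y‖ : ℂ) ^ 2) = 𝓕⁻ (a ⋆[.mul ℂ ℂ] reflectConj a) := by
    ext y
    rw [fourierInv_convolution ha.integrable ha.reflectConj.integrable, fourierInv_reflectConj,
      Complex.mul_conj']
  have hWdensity : wienerNorm (a ⋆[.mul ℂ ℂ] reflectConj a) < ∞ :=
    (wienerNorm_convolution_le ha.integrable ha.reflectConj.integrable).trans_lt <|
      ENNReal.mul_lt_top ENNReal.ofReal_lt_top (by rwa [wienerNorm_reflectConj])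
  have hsymbol : potentialSymbol a =
      fun ζ => (newtonSymbol ζ : ℂ) * (a ⋆[.mul ℂ ℂ] reflectConj a) ζ :=
    funext fun ζ => Complex.real_smul
  have hpotential := integrable_potentialSymbol ha
  ext x
  rw [nonlin, hdensity, hartreeSymbol, fourierInv_convolution hpotential ha.integrable,
    newton_fourierInv ha.autocorrelation.integrable hWdensity (hsymbol ▸ hpotential), hsymbol]

theorem wienerNorm_hartreeSymbol_le {a : Rd → ℝ} {b : Rd → ℂ} (ha : IsTestSymbol R a)
    (hb : IsTestSymbol R b) (hba : ∀ ξ, ‖b ξ‖ ≤ a ξ) :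
    wienerNorm (hartreeSymbol b) ≤ ENNReal.ofReal (∫ ζ, potentialSymbol a ζ) * wienerNorm b := by
  refine (wienerNorm_convolution_le (integrable_potentialSymbol hb) hb.integrable).trans ?_
  gcongr
  · exact (integrable_potentialSymbol hb).norm
  · exact integrable_potentialSymbol ha
  · exact fun ζ => norm_potentialSymbol_le ha hba ζ

end Hartree

section Duhamel

variable {R : ℝ} {a : Rd → ℂ}

/-- The Fourier transform of the free evolution `U(τ)φ` for `φ = 𝓕⁻ a`. -/
def freeSymbol (m : ℝ) (a : Rd → ℂ) (τ : ℝ) (ξ : Rd) : ℂ := propagatorSymbol m τ ξ * a ξ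

/-- The Fourier transform of `U(t - τ)[(|x|⁻¹ ∗ |U(τ)φ|²) U(τ)φ]` for `φ = 𝓕⁻ a`. -/
def duhamelIntegrand (m : ℝ) (a : Rd → ℂ) (t τ : ℝ) (ξ : Rd) : ℂ :=
  propagatorSymbol m (t - τ) ξ * hartreeSymbol (freeSymbol m a τ) ξ

/-- The Fourier transform of the first Picard iterate at time `t ≥ 0` with data `𝓕⁻ a`. -/
def duhamelSymbol (m : ℝ) (a : Rd → ℂ) (t : ℝ) (ξ : Rd) : ℂ :=
  ∫ τ in Set.Ioc 0 t, duhamelIntegrand m a t τ ξ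

theorem norm_freeSymbol (m : ℝ) (a : Rd → ℂ) (τ : ℝ) (ξ : Rd) : ‖freeSymbol m a τ ξ‖ = ‖a ξ‖ := by
  rw [freeSymbol, norm_mul, norm_propagatorSymbol, one_mul]

theorem IsTestSymbol.freeSymbol (ha : IsTestSymbol R a) (m τ : ℝ) :
    IsTestSymbol R (freeSymbol m a τ) :=
  ha.mul ((continuous_propagatorSymbol m).comp (.prodMk_right τ))

theorem IsTestSymbol.duhamelIntegrand (ha : IsTestSymbol R a) (m t τ : ℝ) :
    IsTestSymbol (R + R + R) (duhamelIntegrand m a t τ) :=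
  (ha.freeSymbol m τ).hartreeSymbol.mul ((continuous_propagatorSymbol m).comp (.prodMk_right _))

theorem stronglyMeasurable_duhamelIntegrand (ha : Continuous a) (m t : ℝ) :
    StronglyMeasurable (Function.uncurry (duhamelIntegrand m a t)) :=
  ((continuous_propagatorSymbol m).comp (by fun_prop :
      Continuous fun p : ℝ × Rd => (t - p.1, p.2))).stronglyMeasurable.mul <|
    stronglyMeasurable_hartreeSymbol
      ((continuous_propagatorSymbol m).mul (ha.comp continuous_snd)).stronglyMeasurable

theorem norm_duhamelIntegrand_le (ha : IsTestSymbol R a) (m t τ : ℝ) (ξ : Rd) :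
    ‖duhamelIntegrand m a t τ ξ‖ ≤ hartreeSymbol (fun η => ‖a η‖) ξ := by
  rw [duhamelIntegrand, norm_mul, norm_propagatorSymbol, one_mul]
  exact norm_hartreeSymbol_le ha.norm (fun η => (norm_freeSymbol m a τ η).le) ξ

theorem integrable_duhamelIntegrand (ha : IsTestSymbol R a) (m t : ℝ) :
    Integrable (Function.uncurry (duhamelIntegrand m a t))
      ((volume.restrict (Set.Ioc 0 t)).prod volume) :=
  (ha.norm.hartreeSymbol.integrable.comp_snd _).mono'
    (stronglyMeasurable_duhamelIntegrand ha.continuous m t).aestronglyMeasurable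
    (.of_forall fun p => norm_duhamelIntegrand_le ha m t p.1 p.2)

theorem integrableOn_duhamelIntegrand (ha : IsTestSymbol R a) (m t : ℝ) (ξ : Rd) :
    IntegrableOn (fun τ => duhamelIntegrand m a t τ ξ) (Set.Ioc 0 t) :=
  (integrable_const (hartreeSymbol (fun η => ‖a η‖) ξ)).mono'
    ((stronglyMeasurable_duhamelIntegrand ha.continuous m t).comp_measurable
      measurable_prodMk_right).aestronglyMeasurable
    (.of_forall fun τ => norm_duhamelIntegrand_le ha m t τ ξ)

theorem IsTestSymbol.duhamelSymbol (ha : IsTestSymbol R a) (m t : ℝ) :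
    IsTestSymbol (R + R + R) (duhamelSymbol m a t) where
  continuous := by
    obtain ⟨M, hM⟩ := ha.norm.hartreeSymbol.continuous.bounded_above_of_compact_support
      ha.norm.hartreeSymbol.hasCompactSupport
    exact continuous_of_dominated (bound := fun _ => M)
      (fun ξ => (integrableOn_duhamelIntegrand ha m t ξ).aestronglyMeasurable)
      (fun ξ => .of_forall fun τ => (norm_duhamelIntegrand_le ha m t τ ξ).trans
        ((le_abs_self _).trans (hM ξ)))
      (integrable_const M) (.of_forall fun τ => (ha.duhamelIntegrand m t τ).continuous)
  eq_zero ξ hξ := integral_eq_zero_of_ae <| .of_forall fun τ =>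
    (ha.duhamelIntegrand m t τ).eq_zero ξ hξ

theorem uProp_fourierInv (ha : IsTestSymbol R a) (hW : wienerNorm a < ∞) (m τ : ℝ) :
    uProp m τ (𝓕⁻ a) = 𝓕⁻ (fun ξ => propagatorSymbol m τ ξ * a ξ) := by
  rw [uProp, fourier_fourierInv_of_wienerNorm_lt_top ha.continuous ha.integrable hW]
  rfl

theorem exists_wienerNorm_freeSymbol_le (ha : IsTestSymbol R a) (hW : wienerNorm a < ∞)
    (m t : ℝ) : ∃ B : ℝ≥0∞, B < ∞ ∧ ∀ τ, |τ| ≤ t → wienerNorm (freeSymbol m a τ) ≤ B := by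
  obtain ⟨B, hB⟩ := exists_isWienerMultiplier_propagatorSymbol (V := Rd) m R t
  exact ⟨_, ENNReal.mul_lt_top ENNReal.coe_lt_top hW, fun τ hτ => (hB τ hτ).wienerNorm_le a ha⟩

theorem exists_wienerNorm_hartreeSymbol_freeSymbol_le (ha : IsTestSymbol R a)
    (hW : wienerNorm a < ∞) (m t : ℝ) :
    ∃ B : ℝ≥0∞, B < ∞ ∧ ∀ τ, |τ| ≤ t → wienerNorm (hartreeSymbol (freeSymbol m a τ)) ≤ B := by
  obtain ⟨B, hB, hle⟩ := exists_wienerNorm_freeSymbol_le ha hW m t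
  exact ⟨_, ENNReal.mul_lt_top ENNReal.ofReal_lt_top hB, fun τ hτ =>
    (wienerNorm_hartreeSymbol_le ha.norm (ha.freeSymbol m τ)
      fun η => (norm_freeSymbol m a τ η).le).trans (mul_le_mul_right (hle τ hτ) _)⟩

theorem uProp_nonlin_uProp_fourierInv (ha : IsTestSymbol R a) (hW : wienerNorm a < ∞)
    (m t τ : ℝ) :
    uProp m (t - τ) (nonlin (uProp m τ (𝓕⁻ a))) = 𝓕⁻ (duhamelIntegrand m a t τ) := by
  obtain ⟨B, hB, hfree⟩ := exists_wienerNorm_freeSymbol_le ha hW m |τ|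
  obtain ⟨B', hB', hhartree⟩ := exists_wienerNorm_hartreeSymbol_freeSymbol_le ha hW m |τ|
  have hb := ha.freeSymbol m τ
  calc uProp m (t - τ) (nonlin (uProp m τ (𝓕⁻ a)))
      = uProp m (t - τ) (nonlin (𝓕⁻ (freeSymbol m a τ))) := by rw [uProp_fourierInv ha hW]; rfl
    _ = uProp m (t - τ) (𝓕⁻ (hartreeSymbol (freeSymbol m a τ))) := by
        rw [nonlin_fourierInv hb ((hfree τ le_rfl).trans_lt hB)]
    _ = 𝓕⁻ (duhamelIntegrand m a t τ) :=
        uProp_fourierInv hb.hartreeSymbol ((hhartree τ le_rfl).trans_lt hB') m _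

theorem wienerNorm_duhamelSymbol_lt_top (ha : IsTestSymbol R a) (hW : wienerNorm a < ∞)
    (m t : ℝ) : wienerNorm (duhamelSymbol m a t) < ∞ := by
  obtain ⟨B, hB, hhartree⟩ := exists_wienerNorm_hartreeSymbol_freeSymbol_le ha hW m t
  obtain ⟨K, hK⟩ := exists_isWienerMultiplier_propagatorSymbol (V := Rd) m (R + R + R) t
  have hle : ∀ᵐ τ ∂volume.restrict (Set.Ioc 0 t),
      wienerNorm (duhamelIntegrand m a t τ) ≤ K * B := by
    filter_upwards [ae_restrict_mem measurableSet_Ioc] with τ ⟨hτ0, hτt⟩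
    have hτ : |τ| ≤ t := abs_le.2 ⟨by linarith, hτt⟩
    have htτ : |t - τ| ≤ t := abs_le.2 ⟨by linarith, by linarith⟩
    exact ((hK _ htτ).wienerNorm_le _ (ha.freeSymbol m τ).hartreeSymbol).trans
      (mul_le_mul_right (hhartree τ hτ) _)
  calc wienerNorm (duhamelSymbol m a t)
      ≤ ∫⁻ τ in Set.Ioc 0 t, wienerNorm (duhamelIntegrand m a t τ) :=
        wienerNorm_integral_le (stronglyMeasurable_duhamelIntegrand ha.continuous m t)
          (integrable_duhamelIntegrand ha m t)
    _ ≤ ∫⁻ _ in Set.Ioc 0 t, K * B := lintegral_mono_ae hle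
    _ < ∞ := by
        rw [setLIntegral_const]
        exact ENNReal.mul_lt_top (ENNReal.mul_lt_top ENNReal.coe_lt_top hB) measure_Ioc_lt_top

theorem fourier_duhamelFree (ha : IsTestSymbol R a) (hW : wienerNorm a < ∞) (m : ℝ) {t : ℝ}
    (ht : 0 ≤ t) : 𝓕 (duhamelFree m (𝓕⁻ a) t) = duhamelSymbol m a t := by
  have hduhamel : duhamelFree m (𝓕⁻ a) t = 𝓕⁻ (duhamelSymbol m a t) := by
    ext x
    rw [duhamelFree, intervalIntegral.integral_of_le ht]
    simp only [uProp_nonlin_uProp_fourierInv ha hW]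
    exact (fourierInv_integral (integrable_duhamelIntegrand ha m t) x).symm
  have hD := ha.duhamelSymbol m t
  rw [hduhamel, fourier_fourierInv_of_wienerNorm_lt_top hD.continuous hD.integrable
    (wienerNorm_duhamelSymbol_lt_top ha hW m t)]

end Duhamel

section LowerBound

theorem mul_integral_le_re_mul_integral {α : Type*} [MeasurableSpace α] {μ : Measure α}
    {F : α → ℝ} {f : α → ℂ} {c : ℝ} {z : ℂ} (hF : Integrable F μ) (hf : Integrable f μ)
    (hle : ∀ᵐ x ∂μ, c * F x ≤ (z * f x).re) : c * ∫ x, F x ∂μ ≤ (z * ∫ x, f x ∂μ).re := by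
  rw [← integral_const_mul, ← integral_const_mul, ← Complex.reCLM_apply,
    ← Complex.reCLM.integral_comp_comm (hf.const_mul z)]
  exact integral_mono_ae (hF.const_mul c) (hf.const_mul z).re hle

theorem mul_volume_closedBall_le_integral {V : Type*} [NormedAddCommGroup V] [MeasurableSpace V]
    [OpensMeasurableSpace V] [ProperSpace V] {μ : Measure V} [IsFiniteMeasureOnCompacts μ]
    [NullSingletonClass μ] {f : V → ℝ} {c r : ℝ} (hf : Integrable f μ) (hf0 : ∀ x, 0 ≤ f x)
    (hc : ∀ x ≠ 0, ‖x‖ ≤ r → c ≤ f x) : c * μ.real (Metric.closedBall 0 r) ≤ ∫ x, f x ∂μ := by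
  have hball : μ.real (Metric.closedBall 0 r \ {0}) = μ.real (Metric.closedBall 0 r) := by
    rw [measureReal_def, measureReal_def, measure_sdiff_null (measure_singleton 0)]
  calc c * μ.real (Metric.closedBall 0 r)
      = c * μ.real (Metric.closedBall 0 r \ {0}) := by rw [hball]
    _ ≤ ∫ x in Metric.closedBall 0 r \ {0}, f x ∂μ :=
        setIntegral_ge_of_const_le_real (measurableSet_closedBall.diff (measurableSet_singleton 0))
          (measure_ne_top_of_subset Set.sdiff_subset measure_closedBall_lt_top.ne)
          (fun x hx => hc x hx.2 (by simpa using hx.1)) hf.integrableOn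
    _ ≤ ∫ x, f x ∂μ := setIntegral_le_integral hf (.of_forall hf0)

variable {R : ℝ} {a : Rd → ℝ} {b : Rd → ℂ} {θ : Rd → ℝ} {θ₀ δ : ℝ}

theorem half_le_cos {x : ℝ} (hx : |x| ≤ 1) : 1 / 2 ≤ Real.cos x := by
  have := Real.one_sub_sq_div_two_le_cos (x := x)
  have := (sq_le_one_iff_abs_le_one x).2 hx
  linarith

theorem half_mul_le_re_of_abs_phase_le (ha : IsTestSymbol R a) (ha0 : ∀ ξ, 0 ≤ a ξ)
    (hb : ∀ ξ, b ξ = a ξ * cexp (θ ξ * I)) (hθ : ∀ ξ, ‖ξ‖ ≤ R → |θ ξ| ≤ δ)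
    (hδ : |θ₀| + 3 * δ ≤ 1) (x y z : Rd) :
    1 / 2 * a x * (a y * reflectConj a z) ≤
      (cexp (θ₀ * I) * b x * (b y * reflectConj b z)).re := by
  set p := a x * (a y * a (-z)) with hp
  set ω := θ₀ + θ x + (θ y - θ (-z)) with hω
  have hproduct : cexp (θ₀ * I) * b x * (b y * reflectConj b z) = p * cexp (ω * I) := by
    have hexp : cexp (ω * I) =
        cexp (θ₀ * I) * cexp (θ x * I) * (cexp (θ y * I) * cexp (-(θ (-z) * I))) := by
      rw [← Complex.exp_add, ← Complex.exp_add, ← Complex.exp_add, hω]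
      push_cast
      ring_nf
    simp only [reflectConj, hb, map_mul, Complex.conj_ofReal, ← Complex.exp_conj, Complex.conj_I,
      mul_neg, hexp, hp]
    push_cast
    ring
  rw [hproduct, Complex.re_ofReal_mul, Complex.exp_ofReal_mul_I_re, mul_assoc, mul_comm (1 / 2),
    reflectConj, conj_trivial, ← hp]
  rcases eq_or_ne p 0 with hp0 | hp0
  · simp [hp0]
  · have hnorm {ξ : Rd} (hξ : a ξ ≠ 0) : |θ ξ| ≤ δ :=
      hθ ξ (not_lt.1 fun h => hξ (ha.eq_zero ξ h))
    obtain ⟨hx, hyz⟩ := mul_ne_zero_iff.1 hp0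
    obtain ⟨hy, hz⟩ := mul_ne_zero_iff.1 hyz
    refine mul_le_mul_of_nonneg_left (half_le_cos ?_)
      (mul_nonneg (ha0 x) (mul_nonneg (ha0 y) (ha0 _)))
    linarith [abs_add_le (θ₀ + θ x) (θ y - θ (-z)), abs_add_le θ₀ (θ x), abs_sub (θ y) (θ (-z)),
      hnorm hx, hnorm hy, hnorm hz]

theorem half_mul_hartreeSymbol_le_re (ha : IsTestSymbol R a) (ha0 : ∀ ξ, 0 ≤ a ξ)
    (hb : ∀ ξ, b ξ = a ξ * cexp (θ ξ * I)) (hθc : Continuous θ)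
    (hθ : ∀ ξ, ‖ξ‖ ≤ R → |θ ξ| ≤ δ) (hδ : |θ₀| + 3 * δ ≤ 1) (ξ : Rd) :
    1 / 2 * hartreeSymbol a ξ ≤ (cexp (θ₀ * I) * hartreeSymbol b ξ).re := by
  have hbt : IsTestSymbol R b :=
    ⟨by rw [funext hb]; exact (Complex.continuous_ofReal.comp ha.continuous).mul (by fun_prop),
      fun ξ hξ => by rw [hb, ha.eq_zero ξ hξ, ofReal_zero, zero_mul]⟩
  refine mul_integral_le_re_mul_integral
    (ha.convolutionExistsAt (integrable_potentialSymbol ha) ξ)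
    (hbt.convolutionExistsAt (integrable_potentialSymbol hbt) ξ) (.of_forall fun ζ => ?_)
  have hinner : 1 / 2 * a (ξ - ζ) * (a ⋆[.mul ℝ ℝ] reflectConj a) ζ ≤
      (cexp (θ₀ * I) * b (ξ - ζ) * (b ⋆[.mul ℂ ℂ] reflectConj b) ζ).re :=
    mul_integral_le_re_mul_integral (ha.reflectConj.convolutionExistsAt ha.integrable ζ)
      (hbt.reflectConj.convolutionExistsAt hbt.integrable ζ) (.of_forall fun η =>
        half_mul_le_re_of_abs_phase_le ha ha0 hb hθ hδ (ξ - ζ) η (ζ - η))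
  calc 1 / 2 * (potentialSymbol a ζ * a (ξ - ζ))
      = newtonSymbol ζ * (1 / 2 * a (ξ - ζ) * (a ⋆[.mul ℝ ℝ] reflectConj a) ζ) := by
        rw [potentialSymbol, smul_eq_mul]
        ring
    _ ≤ newtonSymbol ζ *
          (cexp (θ₀ * I) * b (ξ - ζ) * (b ⋆[.mul ℂ ℂ] reflectConj b) ζ).re :=
        mul_le_mul_of_nonneg_left hinner (newtonSymbol_nonneg ζ)
    _ = (cexp (θ₀ * I) * (potentialSymbol b ζ * b (ξ - ζ))).re := by
        rw [← Complex.re_ofReal_mul, potentialSymbol, Complex.real_smul]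
        ring_nf

theorem half_mul_hartreeSymbol_le_norm_duhamelSymbol {m t : ℝ} (hm : 0 ≤ m)
    (ha : IsTestSymbol R a) (ha0 : ∀ ξ, 0 ≤ a ξ) (ht : 0 ≤ t) (htR : 3 * t * R ≤ 1) {ξ : Rd}
    (hξ : ‖ξ‖ ≤ R) :
    t / 2 * hartreeSymbol a ξ ≤ ‖duhamelSymbol m (fun η => (a η : ℂ)) t ξ‖ := by
  have hpointwise : ∀ᵐ τ ∂volume.restrict (Set.Ioc 0 t), 1 / 2 * hartreeSymbol a ξ ≤
      (1 * duhamelIntegrand m (fun η => (a η : ℂ)) t τ ξ).re := by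
    filter_upwards [ae_restrict_mem measurableSet_Ioc] with τ ⟨hτ0, hτt⟩
    rw [one_mul, duhamelIntegrand, propagatorSymbol_eq_exp]
    refine half_mul_hartreeSymbol_le_re (θ := fun η => τ * phase m η) (δ := τ * R) ha ha0
      (fun η => by rw [freeSymbol, propagatorSymbol_eq_exp, mul_comm])
      (continuous_const.mul (continuous_phase m)) (fun η hη => ?_) ?_ ξ
    · rw [abs_mul, abs_of_pos hτ0]
      exact mul_le_mul_of_nonneg_left ((abs_phase_le hm η).trans hη) hτ0.le
    · rw [abs_mul, abs_of_nonneg (sub_nonneg.2 hτt)]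
      nlinarith [abs_phase_le hm ξ, norm_nonneg ξ]
  calc t / 2 * hartreeSymbol a ξ
      = 1 / 2 * ∫ _ in Set.Ioc 0 t, hartreeSymbol a ξ := by
        rw [setIntegral_const, volume_real_Ioc_of_le ht, smul_eq_mul]
        ring
    _ ≤ (1 * duhamelSymbol m (fun η => (a η : ℂ)) t ξ).re :=
        mul_integral_le_re_mul_integral (integrable_const _)
          (integrableOn_duhamelIntegrand ha.ofReal m t ξ) hpointwise
    _ ≤ ‖duhamelSymbol m (fun η => (a η : ℂ)) t ξ‖ := by
        rw [one_mul]
        exact Complex.re_le_norm _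

theorem correlation_nonneg (ha0 : ∀ ξ, 0 ≤ a ξ) (ζ : Rd) : 0 ≤ (a ⋆[.mul ℝ ℝ] reflectConj a) ζ :=
  integral_nonneg fun _ => mul_nonneg (ha0 _) (ha0 _)

theorem mul_le_potentialSymbol {A N : ℝ} (ha : IsTestSymbol R a) (ha0 : ∀ ξ, 0 ≤ a ξ)
    (hA : 0 ≤ A) (hle : ∀ ξ, ‖ξ‖ ≤ N → A ≤ a ξ) {ζ : Rd} (hζ0 : ζ ≠ 0) (hζ : ‖ζ‖ ≤ N / 4) :
    (π * (N / 4) ^ 2)⁻¹ * (A ^ 2 * volume.real (Metric.closedBall (0 : Rd) (N / 4))) ≤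
      potentialSymbol a ζ := by
  have hcorrelation : A ^ 2 * volume.real (Metric.closedBall (0 : Rd) (N / 4)) ≤
      (a ⋆[.mul ℝ ℝ] reflectConj a) ζ := by
    refine mul_volume_closedBall_le_integral
      (ha.reflectConj.convolutionExistsAt ha.integrable ζ)
      (fun η => mul_nonneg (ha0 _) (ha0 _)) fun η _ hη => ?_
    rw [sq]
    refine mul_le_mul (hle _ (by linarith [norm_nonneg η])) (hle _ ?_) hA (ha0 _)
    rw [norm_neg]
    linarith [norm_sub_le ζ η, norm_nonneg ζ]
  have := norm_pos_iff.2 hζ0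
  refine mul_le_mul ?_ hcorrelation (by positivity) (newtonSymbol_nonneg ζ)
  unfold newtonSymbol
  gcongr

theorem exists_mul_le_hartreeSymbol : ∃ c : ℝ, 0 < c ∧ ∀ {R A N : ℝ} {a : Rd → ℝ},
    IsTestSymbol R a → (∀ ξ, 0 ≤ a ξ) → 0 ≤ A → 0 < N → (∀ ξ, ‖ξ‖ ≤ N → A ≤ a ξ) →
      ∀ ξ, ‖ξ‖ ≤ N / 2 → c * A ^ 3 * N ^ 4 ≤ hartreeSymbol a ξ := by
  refine ⟨volume.real (Metric.ball (0 : Rd) 1) ^ 2 / (256 * π), ?_,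
    fun {R A N a} ha ha0 hA hN hle ξ hξ => ?_⟩
  · have : 0 < volume.real (Metric.ball (0 : Rd) 1) :=
      ENNReal.toReal_pos (Metric.measure_ball_pos _ _ one_pos).ne' measure_ball_lt_top.ne
    positivity
  set v := volume.real (Metric.closedBall (0 : Rd) (N / 4)) with hv
  have hdim : v = (N / 4) ^ 3 * volume.real (Metric.ball (0 : Rd) 1) := by
    rw [hv, Measure.addHaar_real_closedBall _ _ (by positivity), finrank_euclideanSpace_fin]
  have hpot0 (ζ : Rd) : 0 ≤ potentialSymbol a ζ :=
    mul_nonneg (newtonSymbol_nonneg ζ) (correlation_nonneg ha0 ζ)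
  calc volume.real (Metric.ball (0 : Rd) 1) ^ 2 / (256 * π) * A ^ 3 * N ^ 4
      = (π * (N / 4) ^ 2)⁻¹ * (A ^ 2 * v) * A * v := by
        rw [hdim]
        field_simp
        ring
    _ ≤ hartreeSymbol a ξ := by
        refine mul_volume_closedBall_le_integral
          (ha.convolutionExistsAt (integrable_potentialSymbol ha) ξ)
          (fun ζ => mul_nonneg (hpot0 ζ) (ha0 _)) fun ζ hζ0 hζ =>
            mul_le_mul (mul_le_potentialSymbol ha ha0 hA hle hζ0 hζ) (hle _ ?_) hA (hpot0 ζ)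
        linarith [norm_sub_le ξ ζ]

end LowerBound

section SobolevWeight

theorem continuous_one_add_sq_rpow {X : Type*} [TopologicalSpace X] {f : X → ℝ}
    (hf : Continuous f) (s : ℝ) : Continuous fun x => (1 + f x ^ 2) ^ s :=
  (continuous_const.add (hf.pow 2)).rpow_const fun _ =>
    .inl (add_pos_of_pos_of_nonneg one_pos (sq_nonneg _)).ne'

variable {V : Type*} [NormedAddCommGroup V] [MeasurableSpace V]

/-- The mass of the Sobolev weight `(1 + |ξ|²)^s` on the ball of radius `r`. -/
def sobolevMass (μ : Measure V) (s r : ℝ) : ℝ :=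
  ∫ x in Metric.closedBall (0 : V) r, (1 + ‖x‖ ^ 2) ^ s ∂μ

theorem sobolevMass_nonneg (μ : Measure V) (s r : ℝ) : 0 ≤ sobolevMass μ s r :=
  integral_nonneg fun x => by positivity

variable [NormedSpace ℝ V] [FiniteDimensional ℝ V] [BorelSpace V] {μ : Measure V}
  [μ.IsAddHaarMeasure] {s r : ℝ}

theorem sobolevMass_pos (hr : 0 < r) : 0 < sobolevMass μ s r := by
  have hcont := continuous_one_add_sq_rpow (continuous_norm (E := V)) s
  refine (setIntegral_pos_iff_support_of_nonneg_ae (.of_forall fun x => by positivity)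
    (hcont.continuousOn.integrableOn_compact (isCompact_closedBall _ _))).2 ?_
  have hsupport : Function.support (fun x : V => (1 + ‖x‖ ^ 2) ^ s) = Set.univ :=
    Set.eq_univ_of_forall fun x => (by positivity : (1 + ‖x‖ ^ 2) ^ s ≠ 0)
  rw [hsupport, Set.univ_inter]
  exact Metric.measure_closedBall_pos _ _ hr

open scoped Pointwise in
theorem sobolevMass_eq_pow_mul (hr : 0 < r) : sobolevMass μ s r =
    r ^ Module.finrank ℝ V * ∫ x in Metric.closedBall (0 : V) 1, (1 + (r * ‖x‖) ^ 2) ^ s ∂μ := by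
  have hscale := Measure.setIntegral_comp_smul_of_pos μ (fun x : V => (1 + ‖x‖ ^ 2) ^ s)
    (Metric.closedBall 0 1) hr
  rw [smul_unitClosedBall, norm_of_nonneg hr.le, smul_eq_mul] at hscale
  simp only [norm_smul, norm_of_nonneg hr.le] at hscale
  rw [hscale, sobolevMass, mul_inv_cancel_left₀ (by positivity)]

theorem sobolevMass_mul_le (hs : s ≤ 0) (hr : 0 < r) {k : ℝ} (hk : 1 ≤ k) :
    sobolevMass μ s (k * r) ≤ k ^ Module.finrank ℝ V * sobolevMass μ s r := by
  have hcont (ρ : ℝ) := continuous_one_add_sq_rpow (continuous_norm (E := V) |>.const_mul ρ) s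
  have hint (ρ : ℝ) := (hcont ρ).continuousOn.integrableOn_compact (μ := μ)
    (isCompact_closedBall (0 : V) 1)
  rw [sobolevMass_eq_pow_mul hr, sobolevMass_eq_pow_mul (by positivity), mul_pow, mul_assoc]
  refine mul_le_mul_of_nonneg_left (mul_le_mul_of_nonneg_left ?_ (by positivity)) (by positivity)
  refine setIntegral_mono (hint _) (hint _) fun x => ?_
  refine Real.rpow_le_rpow_of_nonpos (by positivity) ?_ hs
  gcongr
  exact le_mul_of_one_le_left hr.le hk

theorem tendsto_sobolevMass_div_pow [Nontrivial V] (hs : s < 0) :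
    Tendsto (fun r => sobolevMass μ s r / r ^ Module.finrank ℝ V) atTop (𝓝 0) := by
  have hpointwise : ∀ᵐ x ∂μ.restrict (Metric.closedBall (0 : V) 1),
      Tendsto (fun r : ℝ => (1 + (r * ‖x‖) ^ 2) ^ s) atTop (𝓝 0) := by
    filter_upwards [ae_restrict_of_ae (μ.ae_ne 0)] with x hx
    have hbase : Tendsto (fun r : ℝ => 1 + (r * ‖x‖) ^ 2) atTop atTop :=
      tendsto_atTop_add_const_left _ _ <| (tendsto_pow_atTop two_ne_zero).comp <|
        tendsto_id.atTop_mul_const (norm_pos_iff.2 hx)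
    simpa only [neg_neg, Function.comp_def] using
      (tendsto_rpow_neg_atTop (neg_pos.2 hs)).comp hbase
  have hlimit : Tendsto (fun r : ℝ => ∫ x in Metric.closedBall (0 : V) 1,
      (1 + (r * ‖x‖) ^ 2) ^ s ∂μ) atTop (𝓝 (∫ _ in Metric.closedBall (0 : V) 1, 0 ∂μ)) := by
    refine tendsto_integral_filter_of_dominated_convergence (fun _ => 1)
      (.of_forall fun r => (continuous_one_add_sq_rpow (by fun_prop) s).aestronglyMeasurable)
      (.of_forall fun r => .of_forall fun x => ?_)
      (integrableOn_const measure_closedBall_lt_top.ne) hpointwise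
    rw [norm_of_nonneg (by positivity)]
    exact Real.rpow_le_one_of_one_le_of_nonpos (by nlinarith) hs.le
  rw [integral_zero] at hlimit
  refine hlimit.congr' ?_
  filter_upwards [eventually_gt_atTop 0] with r hr
  rw [sobolevMass_eq_pow_mul hr, mul_div_cancel_left₀ _ (by positivity)]

end SobolevWeight

section HsNorm

variable {s A r : ℝ} {f : Rd → ℂ}

theorem rpow_setLIntegral_weight (hA : 0 ≤ A) :
    (∫⁻ ξ in Metric.closedBall (0 : Rd) r, ENNReal.ofReal ((1 + ‖ξ‖ ^ 2) ^ s * A ^ 2)) ^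
      (1 / 2 : ℝ) = ENNReal.ofReal (A * √(sobolevMass (volume : Measure Rd) s r)) := by
  have hint : IntegrableOn (fun ξ : Rd => (1 + ‖ξ‖ ^ 2) ^ s * A ^ 2) (Metric.closedBall 0 r) :=
    ((continuous_one_add_sq_rpow continuous_norm s).mul
      continuous_const).continuousOn.integrableOn_compact (isCompact_closedBall _ _)
  rw [← ofReal_integral_eq_lintegral_ofReal hint (.of_forall fun ξ => by positivity),
    ENNReal.ofReal_rpow_of_nonneg (integral_nonneg fun ξ => by positivity) (by norm_num),
    ← Real.sqrt_eq_rpow, integral_mul_const, ← sobolevMass,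
    Real.sqrt_mul (sobolevMass_nonneg _ s r), Real.sqrt_sq hA, mul_comm]

theorem HsNorm_le_of_norm_fourier_le (hA : 0 ≤ A) (hle : ∀ ξ, ‖𝓕 f ξ‖ ≤ A)
    (hzero : ∀ ξ, r < ‖ξ‖ → 𝓕 f ξ = 0) :
    HsNorm s f ≤ ENNReal.ofReal (A * √(sobolevMass (volume : Measure Rd) s r)) := by
  rw [← rpow_setLIntegral_weight hA, HsNorm]
  refine ENNReal.rpow_le_rpow ?_ (by norm_num)
  rw [← lintegral_indicator measurableSet_closedBall]
  refine lintegral_mono fun ξ => ?_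
  by_cases hξ : ξ ∈ Metric.closedBall 0 r
  · rw [Set.indicator_of_mem hξ]
    gcongr
    exact hle ξ
  · rw [hzero ξ (by simpa using hξ)]
    simp

theorem le_HsNorm_of_le_norm_fourier (hA : 0 ≤ A) (hle : ∀ ξ, ‖ξ‖ ≤ r → A ≤ ‖𝓕 f ξ‖) :
    ENNReal.ofReal (A * √(sobolevMass (volume : Measure Rd) s r)) ≤ HsNorm s f := by
  rw [← rpow_setLIntegral_weight hA, HsNorm]
  refine ENNReal.rpow_le_rpow ?_ (by norm_num)
  refine (setLIntegral_mono' Metric.isClosed_closedBall.measurableSet fun ξ hξ => ?_).trans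
    (setLIntegral_le_lintegral _ _)
  gcongr
  exact hle ξ (by simpa using hξ)

end HsNorm

theorem isRadial_fourierInv {h : Rd → ℂ} (hh : IsRadial h) : IsRadial (𝓕⁻ h) := by
  intro x y hxy
  set S := (ℝ ∙ (x - y))ᗮ.reflection
  have hinvariant : h ∘ S = h := funext fun ξ => hh _ _ (S.norm_map ξ)
  rw [← Submodule.reflection_sub hxy, ← Real.fourierInv_comp_linearIsometry, hinvariant]

section CutoffDatum

variable {m s A N : ℝ}

/-- The radial datum whose Fourier transform is `A` times the cutoff to frequencies `|ξ| ≲ N`. -/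
def cutoffDatum (A N : ℝ) : Rd → ℂ := 𝓕⁻ fun ξ : Rd => ((A * radialCutoff N ξ : ℝ) : ℂ)

theorem isRadial_cutoffDatum (A N : ℝ) : IsRadial (cutoffDatum A N) :=
  isRadial_fourierInv fun ξ η hξη => by simp only [radialCutoff, hξη]

theorem contDiff_mul_radialCutoff (A N : ℝ) :
    ContDiff ℝ (⊤ : ℕ∞) fun ξ : Rd => A * radialCutoff N ξ :=
  contDiff_const.mul (radialCutoff_contDiff N)

theorem isTestSymbol_mul_radialCutoff (A : ℝ) (hN : 0 < N) :
    IsTestSymbol (2 * N) fun ξ : Rd => A * radialCutoff N ξ :=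
  ⟨(contDiff_mul_radialCutoff A N).continuous, fun ξ hξ => by
    rw [radialCutoff_eq_zero hN hξ, mul_zero]⟩

theorem wienerNorm_ofReal_mul_radialCutoff_lt_top (A : ℝ) (hN : 0 < N) :
    wienerNorm (fun ξ : Rd => ((A * radialCutoff N ξ : ℝ) : ℂ)) < ∞ :=
  wienerNorm_lt_top_of_contDiff (isTestSymbol_mul_radialCutoff A hN).ofReal.hasCompactSupport
    (Complex.ofRealCLM.contDiff.comp (contDiff_mul_radialCutoff A N))

theorem fourier_cutoffDatum (A : ℝ) (hN : 0 < N) (ξ : Rd) :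
    𝓕 (cutoffDatum A N) ξ = ((A * radialCutoff N ξ : ℝ) : ℂ) := by
  have ha := (isTestSymbol_mul_radialCutoff A hN).ofReal
  rw [cutoffDatum, fourier_fourierInv_of_wienerNorm_lt_top ha.continuous ha.integrable
    (wienerNorm_ofReal_mul_radialCutoff_lt_top A hN)]

theorem HsNorm_cutoffDatum_le (hs : s ≤ 0) (hA : 0 ≤ A) (hN : 0 < N) :
    HsNorm s (cutoffDatum A N) ≤
      ENNReal.ofReal (8 * A * √(sobolevMass (volume : Measure Rd) s (N / 2))) := by
  have hmass : √(sobolevMass (volume : Measure Rd) s (2 * N)) ≤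
      8 * √(sobolevMass (volume : Measure Rd) s (N / 2)) := by
    have hscale := sobolevMass_mul_le (μ := (volume : Measure Rd)) hs (half_pos hN)
      (show (1 : ℝ) ≤ 4 by norm_num)
    rw [finrank_euclideanSpace_fin, show 4 * (N / 2) = 2 * N by ring] at hscale
    rw [Real.sqrt_le_left (by positivity), mul_pow, Real.sq_sqrt (sobolevMass_nonneg _ _ _)]
    linarith
  suffices HsNorm s (cutoffDatum A N) ≤
      ENNReal.ofReal (A * √(sobolevMass (volume : Measure Rd) s (2 * N))) from
    this.trans (ENNReal.ofReal_le_ofReal (by nlinarith))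
  refine HsNorm_le_of_norm_fourier_le hA (fun ξ => ?_) fun ξ hξ => ?_
  · rw [fourier_cutoffDatum A hN, Complex.norm_of_nonneg (mul_nonneg hA (radialCutoff_nonneg N ξ))]
    exact mul_le_of_le_one_right hA (radialCutoff_le_one N ξ)
  · rw [fourier_cutoffDatum A hN, radialCutoff_eq_zero hN hξ, mul_zero, ofReal_zero]

theorem HsNorm_cutoffDatum_pos (hA : 0 < A) (hN : 0 < N) : 0 < HsNorm s (cutoffDatum A N) := by
  refine lt_of_lt_of_le ?_ (le_HsNorm_of_le_norm_fourier (A := A) (r := N) hA.le fun ξ hξ => ?_)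
  · exact ENNReal.ofReal_pos.2 (mul_pos hA (Real.sqrt_pos.2 (sobolevMass_pos hN)))
  · rw [fourier_cutoffDatum A hN, radialCutoff_eq_one hN hξ, mul_one, Complex.norm_of_nonneg hA.le]

theorem exists_le_HsNorm_duhamelFree_cutoffDatum (hm : 0 ≤ m) (s : ℝ) :
    ∃ c : ℝ, 0 < c ∧ ∀ {A N : ℝ}, 0 ≤ A → 0 < N →
      ENNReal.ofReal (c * A ^ 3 * N ^ 3 * √(sobolevMass (volume : Measure Rd) s (N / 2))) ≤
        HsNorm s (duhamelFree m (cutoffDatum A N) (1 / (6 * N))) := by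
  obtain ⟨c, hc, hhartree⟩ := exists_mul_le_hartreeSymbol
  refine ⟨c / 12, by positivity, fun {A N} hA hN => ?_⟩
  have ha := isTestSymbol_mul_radialCutoff A hN
  have ha0 (ξ : Rd) : 0 ≤ A * radialCutoff N ξ := mul_nonneg hA (radialCutoff_nonneg N ξ)
  refine le_HsNorm_of_le_norm_fourier (by positivity) fun ξ hξ => ?_
  rw [cutoffDatum, fourier_duhamelFree ha.ofReal (wienerNorm_ofReal_mul_radialCutoff_lt_top A hN) m
    (by positivity)]
  calc c / 12 * A ^ 3 * N ^ 3
      = 1 / (6 * N) / 2 * (c * A ^ 3 * N ^ 4) := by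
        field_simp
        ring
    _ ≤ 1 / (6 * N) / 2 * hartreeSymbol (fun ξ => A * radialCutoff N ξ) ξ := by
        gcongr
        exact hhartree ha ha0 hA hN
          (fun η hη => by rw [radialCutoff_eq_one hN hη, mul_one]) ξ hξ
    _ ≤ _ := half_mul_hartreeSymbol_le_norm_duhamelSymbol hm ha ha0 (by positivity)
        (by field_simp; norm_num) (by linarith)

end CutoffDatum

theorem exists_mul_sobolevMass_lt_pow {s T : ℝ} (hs : s < 0) (hT : 0 < T) {K : ℝ} (hK : 0 < K) :
    ∃ N : ℝ, 0 < N ∧ 1 / (6 * N) ≤ T ∧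
      K * sobolevMass (volume : Measure Rd) s (N / 2) < N ^ 3 := by
  have hdecay := (tendsto_sobolevMass_div_pow (μ := (volume : Measure Rd)) hs).eventually_lt_const
    (inv_pos.2 hK)
  obtain ⟨r, hr, hrT, hsmall⟩ := ((eventually_gt_atTop 0).and
    ((eventually_ge_atTop (1 / (12 * T))).and hdecay)).exists
  rw [finrank_euclideanSpace_fin, div_lt_iff₀ (by positivity), inv_mul_eq_div,
    lt_div_iff₀' hK] at hsmall
  refine ⟨2 * r, by positivity, ?_, ?_⟩
  · rw [div_le_iff₀ (by positivity)] at hrT ⊢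
    linarith
  · rw [mul_div_cancel_left₀ r two_ne_zero, mul_pow]
    linarith [pow_pos hr 3]

theorem mul_cube_lt_of_mul_lt_cube {C c A N M : ℝ} (hc : 0 < c) (hA : 0 < A) (hM : 0 < M)
    (hK : 512 * C / c * M < N ^ 3) : C * (8 * A * √M) ^ 3 < c * A ^ 3 * N ^ 3 * √M := by
  have := Real.sqrt_pos.2 hM
  calc C * (8 * A * √M) ^ 3
      = c * A ^ 3 * √M * (512 * C / c * √M ^ 2) := by
        field_simp
        ring
    _ < c * A ^ 3 * √M * N ^ 3 := by
        rw [Real.sq_sqrt hM.le]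
        gcongr
    _ = c * A ^ 3 * N ^ 3 * √M := by ring

/-- failure of the cubic Duhamel estimate for radial data in `H^s(ℝ³)` for
`s < 0`: for `m ≥ 0`, fixed `T > 0` and any constants `C, ε > 0` there exist a radial `φ`
with `0 < ‖φ‖_{H^s} ≤ ε` and `t ∈ [0,T]` with
`‖∫₀ᵗ U(t-τ)[(|x|⁻¹ ∗ |U(τ)φ|²)U(τ)φ] dτ‖_{H^s} > C ‖φ‖_{H^s}³`. -/
theorem duhamel_estimate_fails_radial (m s T : ℝ) (hm : 0 ≤ m) (hT : 0 < T) (hs : s < 0) :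
    ∀ C : ℝ, 0 < C → ∀ ε : ℝ, 0 < ε →
      ∃ φ : Rd → ℂ, IsRadial φ ∧
        0 < HsNorm s φ ∧ HsNorm s φ ≤ ENNReal.ofReal ε ∧
        ∃ t ∈ Set.Icc (0 : ℝ) T,
          ENNReal.ofReal C * HsNorm s φ ^ 3 < HsNorm s (duhamelFree m φ t) := by
  intro C hC ε hε
  obtain ⟨c, hc, hduhamel⟩ := exists_le_HsNorm_duhamelFree_cutoffDatum hm s
  obtain ⟨N, hN, hNT, hK⟩ :=
    exists_mul_sobolevMass_lt_pow hs hT (show 0 < 512 * C / c by positivity)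
  set M := sobolevMass (volume : Measure Rd) s (N / 2)
  have hM : 0 < √M := Real.sqrt_pos.2 (sobolevMass_pos (by positivity))
  set A := ε / (8 * √M) with hA
  have hAM : 8 * A * √M = ε := by rw [hA]; field_simp
  have hsmall : HsNorm s (cutoffDatum A N) ≤ ENNReal.ofReal ε :=
    hAM ▸ HsNorm_cutoffDatum_le hs.le (by positivity) hN
  refine ⟨cutoffDatum A N, isRadial_cutoffDatum A N, HsNorm_cutoffDatum_pos (by positivity) hN,
    hsmall, 1 / (6 * N), ⟨by positivity, hNT⟩, ?_⟩
  calc ENNReal.ofReal C * HsNorm s (cutoffDatum A N) ^ 3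
      ≤ ENNReal.ofReal (C * ε ^ 3) := by
        rw [ENNReal.ofReal_mul hC.le, ENNReal.ofReal_pow hε.le]
        gcongr
    _ < ENNReal.ofReal (c * A ^ 3 * N ^ 3 * √M) :=
        (ENNReal.ofReal_lt_ofReal_iff (by positivity)).2
          (hAM ▸ mul_cube_lt_of_mul_lt_cube hc (by positivity) (Real.sqrt_pos.1 hM) hK)
    _ ≤ _ := hduhamel (by positivity) hN
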